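/- For the function k-SUM : [q]^n → {0,1}, which evaluates to 1 if and only if some k of the n input numbers sum to 0 modulo q, if q ≥ 2·C(n,k) (twice the binomial coefficient n choose k) then Q(k-SUM) = Ω(n^{k/(k+1)} / √k), where the constant hidden in the Ω is an absolute constant independent of n and k. -/

import Mathlib

open scoped BigOperators ENNReal

namespace QC

/-! ### Inputs and partial functions -/

/-- An input assigns to each index `i` a symbol from the alphabet `Fin (α i)`. -/
abbrev Input (ι : Type) (α : ι → ℕ) := ∀ i : ι, Fin (α i)

/-- A (possibly partial) Boolean-valued query function; `none` means the input
is outside the promise/domain. -/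
abbrev PartialFn (ι : Type) (α : ι → ℕ) := Input ι α → Option Bool

/-- A total function has every input in its domain. -/
def TotalFn {ι : Type} {α : ι → ℕ} (f : PartialFn ι α) : Prop := ∀ x, f x ≠ none

/-- Classical truth value of a proposition, as a `Bool`. -/
noncomputable def ofProp (P : Prop) : Bool := @decide P (Classical.propDecidable P)

/-! ### Decision trees and classical query complexity -/

/-- Decision trees over index set `ι` with alphabets `α` and leaf labels `L`. -/
inductive DTree (ι : Type) (α : ι → ℕ) (L : Type) : Type
  | leaf : L → DTree ι α L
  | node : (i : ι) → (Fin (α i) → DTree ι α L) → DTree ι α L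

namespace DTree

variable {ι : Type} {α : ι → ℕ} {L : Type}

/-- Evaluate a decision tree on an input. -/
def eval : DTree ι α L → Input ι α → L
  | leaf b, _ => b
  | node i child, x => eval (child (x i)) x

/-- The number of queries the tree makes on a given input. -/
def cost : DTree ι α L → Input ι α → ℕ
  | leaf _, _ => 0
  | node i child, x => cost (child (x i)) x + 1

/-- The depth (worst-case number of queries) of a decision tree. -/
def depth : DTree ι α L → ℕ
  | leaf _ => 0
  | node _ child => (Finset.univ.sup fun a => depth (child a)) + 1

end DTree

variable {ι : Type} {α : ι → ℕ}

/-- Deterministic query complexity `D(f)`. -/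
noncomputable def Dq (f : PartialFn ι α) : ℕ :=
  sInf {d | ∃ T : DTree ι α (Option Bool), T.depth ≤ d ∧
    ∀ x b, f x = some b → T.eval x = some b}

/-- Bounded-error randomized query complexity `R(f)` (worst-case queries,
success probability at least 2/3 on every domain input). -/
noncomputable def Rq (f : PartialFn ι α) : ℕ :=
  sInf {d | ∃ μ : PMF (DTree ι α (Option Bool)),
    (∀ T ∈ μ.support, T.depth ≤ d) ∧
    ∀ x b, f x = some b → 2/3 ≤ μ.toOuterMeasure {T | T.eval x = some b}}

/-- Zero-error randomized query complexity `R₀(f)` (worst-case queries): the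
algorithm never errs, and outputs `none` ("don't know") with probability at most 1/2. -/
noncomputable def R0q (f : PartialFn ι α) : ℕ :=
  sInf {d | ∃ μ : PMF (DTree ι α (Option Bool)),
    (∀ T ∈ μ.support, T.depth ≤ d) ∧
    (∀ T ∈ μ.support, ∀ x b, f x = some b → T.eval x = some b ∨ T.eval x = none) ∧
    ∀ x b, f x = some b → μ.toOuterMeasure {T | T.eval x = none} ≤ 1/2}

/-- Zero-error randomized query complexity, measured by the worst-case *expected*
number of queries over domain inputs (value in `ℝ≥0∞`). -/
noncomputable def R0expq (f : PartialFn ι α) : ℝ≥0∞ :=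
  sInf {c | ∃ μ : PMF (DTree ι α (Option Bool)),
    (∀ T ∈ μ.support, ∀ x b, f x = some b → T.eval x = some b ∨ T.eval x = none) ∧
    (∀ x b, f x = some b → μ.toOuterMeasure {T | T.eval x = none} ≤ 1/2) ∧
    (∀ x b, f x = some b → ∑' T, μ T * (T.cost x : ℝ≥0∞) ≤ c)}

/-- One-sided-error randomized query complexity `R₁(f)`: accept every 1-input with
probability at least 2/3, and never accept a 0-input. -/
noncomputable def R1q (f : PartialFn ι α) : ℕ :=
  sInf {d | ∃ μ : PMF (DTree ι α (Option Bool)),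
    (∀ T ∈ μ.support, T.depth ≤ d) ∧
    (∀ x, f x = some true → 2/3 ≤ μ.toOuterMeasure {T | T.eval x = some true}) ∧
    (∀ x, f x = some false → ∀ T ∈ μ.support, T.eval x ≠ some true)}

/-! ### Quantum query complexity -/

/-- The index set of the state space of a quantum query algorithm:
a query register `Σ i, Fin (α i)` together with a workspace register `Fin W`. -/
abbrev QIdx (ι : Type) (α : ι → ℕ) (W : ℕ) := (Σ i : ι, Fin (α i)) × Fin W

variable [Fintype ι] [DecidableEq ι]

/-- The standard query oracle for input `x`: the permutation matrix sending the basis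
vector `|i,a⟩|w⟩` to `|i, a + x i⟩|w⟩` (addition modulo `α i`). -/
noncomputable def oracleMatrix (W : ℕ) (x : Input ι α) :
    Matrix (QIdx ι α W) (QIdx ι α W) ℂ :=
  Matrix.of fun j j' =>
    if j.2 = j'.2 ∧ j.1 = ⟨j'.1.1, j'.1.2 + x j'.1.1⟩ then 1 else 0

/-- The product `U_T · O · U_{T-1} · O ⋯ O · U_0` of unitaries interleaved with oracle
calls, defining a `T`-query quantum algorithm. -/
noncomputable def qProd {τ : Type} [Fintype τ] (U : ℕ → Matrix τ τ ℂ) (Ox : Matrix τ τ ℂ) :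
    ℕ → Matrix τ τ ℂ
  | 0 => U 0
  | t + 1 => U (t + 1) * Ox * qProd U Ox t

/-- A quantum query algorithm: a number `T` of queries, a workspace size `W`,
unitaries `U 0, …, U T`, a unit initial state, and a measurement assigning to each
basis state an output in `Option Bool` (`none` = "don't know"). -/
structure QAlg (ι : Type) [Fintype ι] [DecidableEq ι] (α : ι → ℕ) where
  T : ℕ
  W : ℕ
  U : ℕ → Matrix (QIdx ι α W) (QIdx ι α W) ℂ
  unitary : ∀ t, U t ∈ Matrix.unitaryGroup (QIdx ι α W) ℂ
  init : QIdx ι α W → ℂ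
  init_norm : ∑ j, ‖init j‖ ^ 2 = 1
  out : QIdx ι α W → Option Bool

/-- The final state of a quantum algorithm on input `x`. -/
noncomputable def QAlg.finalState (A : QAlg ι α) (x : Input ι α) : QIdx ι α A.W → ℂ :=
  (qProd A.U (oracleMatrix A.W x) A.T).mulVec A.init

/-- The probability that the algorithm outputs `v` on input `x`. -/
noncomputable def QAlg.outProb (A : QAlg ι α) (x : Input ι α) (v : Option Bool) : ℝ :=
  ∑ j, if A.out j = v then ‖A.finalState x j‖ ^ 2 else 0

/-- Bounded-error quantum query complexity `Q(f)`. -/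
noncomputable def Qq (f : PartialFn ι α) : ℕ :=
  sInf {d | ∃ A : QAlg ι α, A.T ≤ d ∧
    ∀ x b, f x = some b → (2 : ℝ)/3 ≤ A.outProb x (some b)}

/-- Exact quantum query complexity `Q_E(f)`. -/
noncomputable def QEq (f : PartialFn ι α) : ℕ :=
  sInf {d | ∃ A : QAlg ι α, A.T ≤ d ∧
    ∀ x b, f x = some b → A.outProb x (some b) = 1}

/-- One-sided-error quantum query complexity `Q₁(f)`. -/
noncomputable def Q1q (f : PartialFn ι α) : ℕ :=
  sInf {d | ∃ A : QAlg ι α, A.T ≤ d ∧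
    (∀ x, f x = some true → (2 : ℝ)/3 ≤ A.outProb x (some true)) ∧
    (∀ x, f x = some false → A.outProb x (some true) = 0)}

/-- Zero-error quantum query complexity `Q₀(f)`: never wrong, outputs `none`
with probability at most 1/2. -/
noncomputable def Q0q (f : PartialFn ι α) : ℕ :=
  sInf {d | ∃ A : QAlg ι α, A.T ≤ d ∧
    ∀ x b, f x = some b → A.outProb x (some !b) = 0 ∧ A.outProb x none ≤ 1/2}

/-! ### Certificate complexity -/

/-- A partial assignment `ρ` is consistent with an input `x`. -/
def Consistent (ρ : ∀ i : ι, Option (Fin (α i))) (x : Input ι α) : Prop :=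
  ∀ i v, ρ i = some v → x i = v

/-- The number of fixed positions of a partial assignment. -/
noncomputable def certSize (ρ : ∀ i : ι, Option (Fin (α i))) : ℕ :=
  Nat.card {i // (ρ i).isSome}

/-- The certificate complexity of `f` at input `x`: the least size of a partial
assignment consistent with `x` forcing the value `f x` on all domain inputs. -/
noncomputable def CxAt (f : PartialFn ι α) (x : Input ι α) : ℕ :=
  sInf {s | ∃ ρ, Consistent ρ x ∧ (∀ y, Consistent ρ y → f y = none ∨ f y = f x) ∧
    certSize ρ ≤ s}

/-- Certificate complexity `C(f)`. -/
noncomputable def Cq (f : PartialFn ι α) : ℕ :=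
  sSup {s | ∃ x, f x ≠ none ∧ s = CxAt f x}

/-- One-certificate complexity `C¹(f)`. -/
noncomputable def C1q (f : PartialFn ι α) : ℕ :=
  sSup {s | ∃ x, f x = some true ∧ s = CxAt f x}

/-! ### Polynomial degree -/

/-- Exact polynomial degree `deg(f)`: least degree of a real polynomial agreeing
with `f` (as a 0/1 function of the numerical values of the input symbols) on its domain. -/
noncomputable def degq (f : PartialFn ι α) : ℕ :=
  sInf {d | ∃ p : MvPolynomial ι ℝ, p.totalDegree ≤ d ∧
    ∀ x b, f x = some b →
      MvPolynomial.eval (fun i => ((x i : ℕ) : ℝ)) p = if b then 1 else 0}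

/-- Approximate polynomial degree `adeg(f)`: least degree of a real polynomial
approximating `f` pointwise to error 1/3 on its domain. -/
noncomputable def adegq (f : PartialFn ι α) : ℕ :=
  sInf {d | ∃ p : MvPolynomial ι ℝ, p.totalDegree ≤ d ∧
    ∀ x b, f x = some b →
      |MvPolynomial.eval (fun i => ((x i : ℕ) : ℝ)) p - if b then 1 else 0| ≤ 1/3}

end QC
/-! ### Certifying functions and cheat sheets -/

namespace QC

variable {ι : Type} {α : ι → ℕ}

/-- `φ` is a certifying function for the partial function `f`: it accepts `(x, y)`
only when `x` is in the domain of `f` and the first bit of `y` equals `f x`; every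
domain input has some accepted certificate `y`; and the all-zeros `y` is never accepted. -/
def IsCertifying {k : ℕ} (hk : 0 < k) (f : PartialFn ι α)
    (φ : Input ι α → (Fin k → Fin 2) → Bool) : Prop :=
  (∀ x y, f x = none → φ x y = false) ∧
  (∀ x y b, f x = some b → y ⟨0, hk⟩ ≠ (if b then 1 else 0) → φ x y = false) ∧
  (∀ x b, f x = some b → ∃ y, φ x y = true) ∧
  (∀ x, φ x (fun _ => 0) = false)

/-- The index set of the input to a certifying function, viewed as a query function:
the original input together with `k` certificate bits. -/
abbrev CertIdx (ι : Type) (k : ℕ) := ι ⊕ Fin k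

/-- Alphabets for `CertIdx`. -/
def certAlphabet (α : ι → ℕ) (k : ℕ) : CertIdx ι k → ℕ := Sum.elim α fun _ => 2

/-- A certifying function viewed as a total query function on input ⊕ certificate bits. -/
def certFn {k : ℕ} (φ : Input ι α → (Fin k → Fin 2) → Bool) :
    PartialFn (CertIdx ι k) (certAlphabet α k) :=
  fun z => some (φ (fun i => z (Sum.inl i)) (fun q => z (Sum.inr q)))

/-- The index set of the input to the cheat sheet version of a function: `c` copies of
the original input, followed by `2^c` cells each holding `c` certificate strings of `k` bits. -/
abbrev CSIdx (ι : Type) (c k : ℕ) := (Fin c × ι) ⊕ (Fin (2 ^ c) × Fin c × Fin k)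

/-- Alphabets for `CSIdx`. -/
def csAlphabet (α : ι → ℕ) (c k : ℕ) : CSIdx ι c k → ℕ :=
  Sum.elim (fun p => α p.2) fun _ => 2

/-- The `i`-th copy of the original input inside a cheat sheet input. -/
def csX {c k : ℕ} (z : Input (CSIdx ι c k) (csAlphabet α c k)) (i : Fin c) : Input ι α :=
  fun p => z (Sum.inl (i, p))

/-- The `i`-th certificate string in the `ℓ`-th cheat sheet cell. -/
def csY {c k : ℕ} (z : Input (CSIdx ι c k) (csAlphabet α c k)) (ℓ : Fin (2 ^ c))
    (i : Fin c) : Fin k → Fin 2 :=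
  fun q => z (Sum.inr (ℓ, i, q))

/-- The number in `[2^c]` whose binary representation is the bit string `b`. -/
def binToFin (c : ℕ) (b : Fin c → Bool) : Fin (2 ^ c) :=
  ⟨(∑ i, if b i then 2 ^ (i : ℕ) else 0) % 2 ^ c, Nat.mod_lt _ (by positivity)⟩

/-- The defining condition of the cheat sheet function: all `c` copies lie in the
domain of `f`, and the cell addressed by their `f`-values holds certificates
accepted by `φ` for each copy. -/
def CSCond {c k : ℕ} (f : PartialFn ι α) (φ : Input ι α → (Fin k → Fin 2) → Bool)
    (z : Input (CSIdx ι c k) (csAlphabet α c k)) : Prop :=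
  ∃ bvec : Fin c → Bool, (∀ i, f (csX z i) = some (bvec i)) ∧
    ∀ i, φ (csX z i) (csY z (binToFin c bvec) i) = true

/-- The cheat sheet version of `f` with respect to the certifying function `φ`,
with `c` copies of `f`. It is a total function. -/
noncomputable def cheatSheet (c : ℕ) {k : ℕ} (f : PartialFn ι α)
    (φ : Input ι α → (Fin k → Fin 2) → Bool) :
    PartialFn (CSIdx ι c k) (csAlphabet α c k) :=
  fun z => some (ofProp (CSCond f φ z))

/-! ### OR / AND compositions -/

/-- The `OR` function on `m` bits (alphabet `Fin 2`). -/
def orFn (m : ℕ) (z : Fin m → Fin 2) : Fin 2 := if ∃ j, z j = 1 then 1 else 0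

/-- The `AND` function on `m` bits (alphabet `Fin 2`). -/
def andFn (m : ℕ) (z : Fin m → Fin 2) : Fin 2 := if ∀ j, z j = 1 then 1 else 0

/-- The composition `f ∘ OR_m`. -/
def composeOr {n : ℕ} (f : PartialFn (Fin n) fun _ => 2) (m : ℕ) :
    PartialFn (Fin n × Fin m) (fun _ => 2) :=
  fun z => f fun i => orFn m fun j => z (i, j)

/-- The composition `f ∘ AND_m ∘ OR_m`. -/
def composeAndOr {n : ℕ} (f : PartialFn (Fin n) fun _ => 2) (m : ℕ) :
    PartialFn (Fin n × Fin m × Fin m) (fun _ => 2) :=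
  fun z => f fun i => andFn m fun j => orFn m fun l => z (i, j, l)

/-! ### k-SUM, Block k-sum, BKK and its recursive composition -/

/-- The `k`-SUM function on `n` numbers from `[q]`: is there a set of `k` of the
input numbers summing to `0` modulo `q`? -/
noncomputable def kSUMfn (n q k : ℕ) : PartialFn (Fin n) (fun _ => q) :=
  fun x => some (ofProp (∃ S : Finset (Fin n), S.card = k ∧
    (∑ i ∈ S, (x i : ℕ)) % q = 0))

/-- Number of ones in a block of bits. -/
def onesCount {B : ℕ} (z : Fin B → Fin 2) : ℕ := (Finset.univ.filter fun j => z j = 1).card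

/-- The number encoded in binary by a block of bits. -/
def blockVal {B : ℕ} (z : Fin B → Fin 2) : ℕ := ∑ j, if z j = 1 then 2 ^ (j : ℕ) else 0

/-- A block is balanced if it has an equal number of 0s and 1s. -/
def isBalanced {B : ℕ} (z : Fin B → Fin 2) : Prop := 2 * onesCount z = B

/-- Block `k`-sum on `nb` blocks of `B` bits each: value 1 iff there are `k` balanced
blocks whose encoded numbers sum to 0 (mod `2^B`) and every other block has at least
as many 1s as 0s. -/
noncomputable def blockKSumBool (nb B k : ℕ) (z : Fin nb × Fin B → Fin 2) : Bool :=
  ofProp (∃ S : Finset (Fin nb), S.card = k ∧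
    (∀ i ∈ S, isBalanced fun j => z (i, j)) ∧
    (∑ i ∈ S, blockVal fun j => z (i, j)) % 2 ^ B = 0 ∧
    ∀ i ∉ S, B ≤ 2 * onesCount fun j => z (i, j))

/-- The Boolean version of `k`-SUM on `m` numbers of `w` bits each (mod `2^w`). -/
noncomputable def kSumBool (m w k : ℕ) (z : Fin m × Fin w → Fin 2) : Bool :=
  ofProp (∃ S : Finset (Fin m), S.card = k ∧
    (∑ i ∈ S, blockVal fun j => z (i, j)) % 2 ^ w = 0)

/-- Block size of the outer Block `k`-sum in `BKK` on (roughly) `n` outer bits. -/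
def bkkB (n k : ℕ) : ℕ := 10 * k * Nat.log 2 n
/-- Number of blocks of the outer Block `k`-sum in `BKK`. -/
def bkkNB (n k : ℕ) : ℕ := n / bkkB n k
/-- Bits per number of the inner Boolean `k`-SUM in `BKK`. -/
def bkkW (n k : ℕ) : ℕ := k * Nat.log 2 n
/-- Number of numbers of the inner Boolean `k`-SUM in `BKK`. -/
def bkkM (n k : ℕ) : ℕ := n / bkkW n k

/-- The index set of the inputs of `BKK_{n²,k}` (one inner `k`-SUM input bit for
each outer Block `k`-sum input bit; roughly `n²` bits in total). -/
abbrev BKKIdx (n k : ℕ) := (Fin (bkkNB n k) × Fin (bkkB n k)) × (Fin (bkkM n k) × Fin (bkkW n k))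

/-- `BKK_{n²,k}`: Block `k`-sum composed with the Boolean version of `k`-SUM. -/
noncomputable def bkkBool (n k : ℕ) (z : BKKIdx n k → Fin 2) : Bool :=
  blockKSumBool (bkkNB n k) (bkkB n k) k fun ob =>
    if kSumBool (bkkM n k) (bkkW n k) k (fun p => z (ob, p)) then 1 else 0

/-- `BKK_{n²,k}` as a total query function. -/
noncomputable def BKKfn (n k : ℕ) : PartialFn (BKKIdx n k) (fun _ => 2) :=
  fun z => some (bkkBool n k z)

/-- The `d`-fold self-composition of a total Boolean function `g`: a depth-`d` tree
each of whose internal nodes is a copy of `g`; input bits are indexed by root-to-leaf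
paths `Fin d → I`. -/
noncomputable def iterFn {I : Type} (g : (I → Fin 2) → Bool) :
    (d : ℕ) → ((Fin d → I) → Fin 2) → Bool
  | 0, z => decide (z (fun i => i.elim0) = 1)
  | d + 1, z => g fun a => if iterFn g d (fun v => z (Fin.cons a v)) then 1 else 0

/-- The recursion depth used for `RecBKK`: `d = (4/25)·log n / log log n`. -/
def recD (n : ℕ) : ℕ := 4 * Nat.log 2 n / (25 * Nat.log 2 (Nat.log 2 n))

/-- The index set of the inputs of `RecBKK`. -/
abbrev RecIdx (n : ℕ) := Fin (recD n) → BKKIdx n (Nat.log 2 n)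

/-- `RecBKK`: the `recD n`-fold self-composition of `BKK` with `k = log n`. -/
noncomputable def RecBKKfn (n : ℕ) : PartialFn (RecIdx n) (fun _ => 2) :=
  fun z => some (iterFn (bkkBool n (Nat.log 2 n)) (recD n) z)

/-- The nominal input size `N = n^{2d}` of `RecBKK`. -/
def recN (n : ℕ) : ℕ := n ^ (2 * recD n)

end QC

/-!
Run a query algorithm on the uniform superposition of all inputs and keep the input register in the
Fourier basis. A query then adds a frequency supported on the queried position, so after `T` queries
every frequency in the state has support of size at most `T`. Restricting to the inputs that sum to
`0` over a `k`-set `S` amounts to adding up the amplitudes over cosets of the vectors constant on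
`S` and zero elsewhere. Averaged over `S`, this hardly changes the acceptance probability:

* the part of the state whose support contains `S` only changes through queries at a missing
  position of `S`, and a support of size at most `T` is one position short of containing at most
  `T.choose (k - 1)` such sets for each queried position;
* two distinct frequencies of one coset have supports that together contain `S`, so for supports not
  containing `S` the cross terms can be weighted by the size of the intersection with `S`, which is
  small for most `S`.

If `2 * n.choose k ≤ q`, however, at least half of the inputs have no zero-sum `k`-set, and an
algorithm for `k`-SUM has to tell the planted inputs from the uniform ones, which forces
`T ^ 2 * T.choose (k - 1)` to be at least a constant times `n.choose k`.
-/

namespace QC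

open Finset Matrix
open scoped Kronecker

/-! ### Norm and binomial estimates -/

section Preliminaries

lemma ofReal_sum_norm_sq {n : Type*} [Fintype n] (v : n → ℂ) :
    ((∑ j, ‖v j‖ ^ 2 : ℝ) : ℂ) = star v ⬝ᵥ v := by
  simp only [dotProduct, Pi.star_apply, Complex.ofReal_sum, Complex.ofReal_pow,
    RCLike.star_def, RCLike.conj_mul]
  rfl

lemma sum_norm_sq_mulVec {m n : Type*} [Fintype m] [Fintype n] [DecidableEq n]
    {M : Matrix m n ℂ} {c : ℝ} (hM : Mᴴ * M = (c : ℂ) • 1) (v : n → ℂ) :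
    ∑ i, ‖(M *ᵥ v) i‖ ^ 2 = c * ∑ j, ‖v j‖ ^ 2 := by
  apply Complex.ofReal_injective
  rw [Complex.ofReal_mul, ofReal_sum_norm_sq, ofReal_sum_norm_sq, star_mulVec,
    dotProduct_mulVec, vecMul_vecMul, hM, vecMul_smul, vecMul_one, smul_dotProduct, smul_eq_mul]

lemma sum_norm_sq_mulVec_of_mem_unitaryGroup {n : Type*} [Fintype n] [DecidableEq n]
    {M : Matrix n n ℂ} (hM : M ∈ unitaryGroup n ℂ) (v : n → ℂ) :
    ∑ j, ‖(M *ᵥ v) j‖ ^ 2 = ∑ j, ‖v j‖ ^ 2 := by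
  have hM' : Mᴴ * M = ((1 : ℝ) : ℂ) • 1 := by
    rw [Complex.ofReal_one, one_smul]
    exact mem_unitaryGroup_iff'.1 hM
  rw [sum_norm_sq_mulVec hM', one_mul]

/-- For `w = 1` this is the Cauchy–Schwarz inequality. -/
lemma norm_sum_sq_le {κ E : Type*} [SeminormedAddCommGroup E] {s : Finset κ} {f : κ → E}
    {w : κ → ℝ} {m : ℕ} (hs : #s ≤ m + 1) (hw0 : ∀ a ∈ s, 0 ≤ w a)
    (hw : ∀ a ∈ s, ∀ b ∈ s, a ≠ b → 1 ≤ w a * w b) :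
    ‖∑ a ∈ s, f a‖ ^ 2 ≤ ∑ a ∈ s, (1 + m * w a) * ‖f a‖ ^ 2 := by
  classical
  have pair_le : ∀ a ∈ s, ∀ b ∈ s, ‖f a‖ * ‖f b‖ ≤
      (w a * ‖f a‖ ^ 2 + w b * ‖f b‖ ^ 2) / 2 + if a = b then (1 - w a) * ‖f a‖ ^ 2 else 0 := by
    intro a ha b hb
    split_ifs with hab
    · subst hab
      exact le_of_eq (by ring)
    · have hle : (‖f a‖ * ‖f b‖) ^ 2 ≤ (w a * ‖f a‖ ^ 2) * (w b * ‖f b‖ ^ 2) := by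
        calc (‖f a‖ * ‖f b‖) ^ 2 ≤ (w a * w b) * (‖f a‖ * ‖f b‖) ^ 2 :=
              le_mul_of_one_le_left (sq_nonneg _) (hw a ha b hb hab)
          _ = _ := by ring
      have hA := mul_nonneg (hw0 a ha) (sq_nonneg ‖f a‖)
      have hB := mul_nonneg (hw0 b hb) (sq_nonneg ‖f b‖)
      rw [add_zero]
      refine abs_le_of_sq_le_sq' (hle.trans ?_) (by positivity) |>.2
      linarith [sq_nonneg (w a * ‖f a‖ ^ 2 - w b * ‖f b‖ ^ 2)]
  calc ‖∑ a ∈ s, f a‖ ^ 2 ≤ (∑ a ∈ s, ‖f a‖) ^ 2 := by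
        gcongr
        exact norm_sum_le _ _
    _ = ∑ a ∈ s, ∑ b ∈ s, ‖f a‖ * ‖f b‖ := by rw [sq, sum_mul_sum]
    _ ≤ ∑ a ∈ s, ∑ b ∈ s, ((w a * ‖f a‖ ^ 2 + w b * ‖f b‖ ^ 2) / 2 +
          if a = b then (1 - w a) * ‖f a‖ ^ 2 else 0) :=
        sum_le_sum fun a ha => sum_le_sum fun b hb => pair_le a ha b hb
    _ = ∑ a ∈ s, (1 + (#s - 1 : ℝ) * w a) * ‖f a‖ ^ 2 := by
        simp only [sum_add_distrib, ← sum_div, sum_ite_eq, sum_const, nsmul_eq_mul,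
          ← mul_sum, sum_ite_mem, inter_self, add_mul, sub_mul, one_mul, sum_sub_distrib, mul_assoc]
        ring
    _ ≤ ∑ a ∈ s, (1 + m * w a) * ‖f a‖ ^ 2 := by
        have hs' : (#s - 1 : ℝ) ≤ m := by
          rw [sub_le_iff_le_add]
          exact_mod_cast hs
        gcongr with a ha
        exact hw0 a ha

lemma choose_mul_pow_le {m n : ℕ} {p r : ℝ} (hp : 0 ≤ p) (hpr : p ≤ r) (h : r * m ≤ p * n)
    (j : ℕ) : m.choose j * r ^ j ≤ p ^ j * n.choose j := by
  have descFactorial_le : m.descFactorial j * r ^ j ≤ p ^ j * n.descFactorial j := by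
    induction j with
    | zero => simp
    | succ j ih =>
      have factor_le : ((m - j : ℕ) : ℝ) * r ≤ p * ((n - j : ℕ) : ℝ) := by
        rcases le_total m j with hmj | hjm
        · rw [Nat.sub_eq_zero_of_le hmj, Nat.cast_zero, zero_mul]
          positivity
        · have hn : (n : ℝ) ≤ (n - j : ℕ) + j := by exact_mod_cast le_tsub_add
          rw [Nat.cast_sub hjm]
          nlinarith [(Nat.cast_nonneg j : (0 : ℝ) ≤ j)]
      have hr : 0 ≤ r := hp.trans hpr
      rw [Nat.descFactorial_succ, Nat.descFactorial_succ, Nat.cast_mul, Nat.cast_mul]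
      calc _ = ((m - j : ℕ) * r) * (m.descFactorial j * r ^ j) := by ring
        _ ≤ (p * (n - j : ℕ)) * (p ^ j * n.descFactorial j) := by gcongr
        _ = _ := by ring
  rw [Nat.descFactorial_eq_factorial_mul_choose, Nat.descFactorial_eq_factorial_mul_choose,
    Nat.cast_mul, Nat.cast_mul, mul_assoc, mul_left_comm (p ^ j)] at descFactorial_le
  exact le_of_mul_le_mul_left descFactorial_le (by exact_mod_cast j.factorial_pos)

lemma sum_choose_card_inter {ι : Type*} [DecidableEq ι] {A B : Finset ι} (hAB : A ⊆ B) {m k : ℕ}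
    (hmk : m ≤ k) : ∑ S ∈ powersetCard k B, (#(A ∩ S)).choose m =
      (#A).choose m * (#B - m).choose (k - m) := by
  have subsets (S : Finset ι) : powersetCard m (A ∩ S) =
      (powersetCard m A).filter (· ⊆ S) := by
    ext J
    simp only [mem_powersetCard, mem_filter, subset_inter_iff]
    tauto
  calc _ = ∑ S ∈ powersetCard k B, #((powersetCard m A).filter (· ⊆ S)) := by
        simp only [← card_powersetCard, subsets]
    _ = ∑ J ∈ powersetCard m A, #((powersetCard k B).filter (J ⊆ ·)) :=
        (sum_card_bipartiteAbove_eq_sum_card_bipartiteBelow fun J S : Finset ι => J ⊆ S).symm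
    _ = ∑ _J ∈ powersetCard m A, (#B - m).choose (k - m) := by
        refine sum_congr rfl fun J hJ => ?_
        obtain ⟨hJA, rfl⟩ := mem_powersetCard.1 hJ
        exact card_filter_powersetCard_subset _ _ _ (hJA.trans hAB) hmk
    _ = _ := by rw [sum_const, card_powersetCard, smul_eq_mul]

/-- The bound is uniform in `y` because `A` hits a random `k`-subset of `B` in about
`k * #A / #B ≤ k / y` points. -/
lemma sum_pow_card_inter_le {ι : Type*} [DecidableEq ι] {A B : Finset ι} (hAB : A ⊆ B) (k : ℕ)
    {y : ℝ} (hy : 1 ≤ y) (hA : y * #A ≤ #B) :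
    ∑ S ∈ powersetCard k B, y ^ #(A ∩ S) ≤ 2 ^ k * (#B).choose k := by
  have pow_le : ∀ S ∈ powersetCard k B,
      y ^ #(A ∩ S) ≤ ∑ m ∈ range (k + 1), y ^ m * (#(A ∩ S)).choose m := by
    intro S hS
    have hcard : #(A ∩ S) ≤ k := (mem_powersetCard.1 hS).2 ▸ card_le_card inter_subset_right
    have hsub : range (#(A ∩ S) + 1) ⊆ range (k + 1) := range_subset_range.2 (by lia)
    calc y ^ #(A ∩ S) ≤ (y + 1) ^ #(A ∩ S) := by gcongr; linarith
      _ = ∑ m ∈ range (#(A ∩ S) + 1), y ^ m * (#(A ∩ S)).choose m := by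
          simp only [add_pow, one_pow, mul_one]
      _ ≤ _ := sum_le_sum_of_subset_of_nonneg hsub fun _ _ _ => by positivity
  calc ∑ S ∈ powersetCard k B, y ^ #(A ∩ S)
      ≤ ∑ m ∈ range (k + 1), y ^ m * ∑ S ∈ powersetCard k B, ((#(A ∩ S)).choose m : ℝ) := by
        simp only [mul_sum]
        rw [sum_comm]
        exact sum_le_sum pow_le
    _ = ∑ m ∈ range (k + 1), ((#A).choose m * y ^ m) * (#B - m).choose (k - m) := by
        refine sum_congr rfl fun m hm => ?_
        rw [← Nat.cast_sum, sum_choose_card_inter hAB (mem_range_succ_iff.1 hm), Nat.cast_mul]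
        ring
    _ ≤ ∑ m ∈ range (k + 1), ((#B).choose m : ℝ) * (#B - m).choose (k - m) := by
        gcongr with m
        simpa using choose_mul_pow_le zero_le_one hy (by simpa using hA) m
    _ = ∑ m ∈ range (k + 1), ((#B).choose k : ℝ) * k.choose m := by
        refine sum_congr rfl fun m hm => ?_
        exact_mod_cast (Nat.choose_mul (mem_range_succ_iff.1 hm)).symm
    _ = 2 ^ k * (#B).choose k := by
        rw [← mul_sum, mul_comm]
        exact_mod_cast congrArg (fun t : ℕ => (t * (#B).choose k : ℝ)) (Nat.sum_range_choose k)

end Preliminaries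

/-! ### Joint states of input and algorithm in the Fourier basis -/

/-- States of a register with basis `G` held together with the algorithm's register, with basis
`τ`. The first register holds the input in the Fourier basis, so `G` is the dual of the group
of inputs. -/
abbrev JointState (G τ : Type*) := G → τ → ℂ

namespace JointState

variable {G C τ : Type*}

/-- A matrix applied to the algorithm's register. -/
def act [Fintype τ] (M : Matrix τ τ ℂ) (φ : JointState G τ) : JointState G τ :=
  fun a => M *ᵥ φ a

/-- A query as seen in the Fourier basis: basis state `j` of the algorithm's register adds `δ j`
to the frequency. -/
def shift [Sub G] (δ : τ → G) (φ : JointState G τ) : JointState G τ :=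
  fun a j => φ (a - δ j) j

/-- Summation over the cosets of the image of `h`, which conditions the input on the annihilator
of that image; the factor `(√|C|)⁻¹` renormalises the uniform distribution when `h` is
injective. -/
noncomputable def plant [AddZeroClass G] [AddZeroClass C] [Fintype C] (h : C →+ G)
    (φ : JointState G τ) : JointState G τ :=
  fun a j => ((√(Fintype.card C) : ℝ) : ℂ)⁻¹ * ∑ c, φ (a + h c) j

/-- The amplitude that a query moves across the boundary of `s`, in either direction. -/
noncomputable def crossing [Sub G] (s : Set G) (δ : τ → G) (φ : JointState G τ) :
    JointState G τ :=
  s.indicator (shift δ φ) - shift δ (s.indicator φ)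

/-- The state after `t` queries, interleaved with the matrices `U`, starting from frequency `0`
(the uniform superposition of inputs) and the algorithm state `v`. -/
noncomputable def evolve [AddGroup G] [DecidableEq G] [Fintype τ] (δ : τ → G)
    (U : ℕ → Matrix τ τ ℂ) (v : τ → ℂ) : ℕ → JointState G τ
  | 0 => Pi.single 0 (U 0 *ᵥ v)
  | t + 1 => act (U (t + 1)) (shift δ (evolve δ U v t))

/-- The Euclidean norm of a joint state. -/
noncomputable def l2 [Fintype G] [Fintype τ] (φ : JointState G τ) : ℝ :=
  ‖(WithLp.toLp 2 (Function.uncurry φ) : EuclideanSpace ℂ (G × τ))‖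

open Classical in
lemma norm_crossing_apply [Sub G] (s : Set G) (δ : τ → G) (φ : JointState G τ) (a : G) (j : τ) :
    ‖crossing s δ φ a j‖ = if ¬(a ∈ s ↔ a - δ j ∈ s) then ‖φ (a - δ j) j‖ else 0 := by
  by_cases ha : a ∈ s <;> by_cases hb : a - δ j ∈ s <;> simp [crossing, shift, ha, hb]

section Act

variable [Fintype τ]

lemma act_add (M : Matrix τ τ ℂ) (φ ψ : JointState G τ) : act M (φ + ψ) = act M φ + act M ψ :=
  funext fun a => mulVec_add M (φ a) (ψ a)

lemma indicator_act (s : Set G) (M : Matrix τ τ ℂ) (φ : JointState G τ) :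
    s.indicator (act M φ) = act M (s.indicator φ) := by
  funext a
  by_cases ha : a ∈ s <;> simp [act, ha]

lemma indicator_act_shift [Sub G] (s : Set G) (δ : τ → G) (M : Matrix τ τ ℂ)
    (φ : JointState G τ) :
    s.indicator (act M (shift δ φ)) =
      act M (shift δ (s.indicator φ)) + act M (crossing s δ φ) := by
  rw [indicator_act, ← act_add, crossing, add_sub_cancel]

end Act

section Plant

variable [AddCommGroup G] [AddZeroClass C] [Fintype C] (h : C →+ G)

lemma plant_add (φ ψ : JointState G τ) : plant h (φ + ψ) = plant h φ + plant h ψ := by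
  funext a j
  simp only [plant, Pi.add_apply, sum_add_distrib, mul_add]

lemma plant_act [Fintype τ] (M : Matrix τ τ ℂ) (φ : JointState G τ) :
    plant h (act M φ) = act M (plant h φ) := by
  funext a j
  simp only [plant, act, mulVec, dotProduct, mul_sum]
  rw [sum_comm]
  exact sum_congr rfl fun _ _ => sum_congr rfl fun _ _ => mul_left_comm _ _ _

lemma plant_shift (δ : τ → G) (φ : JointState G τ) :
    plant h (shift δ φ) = shift δ (plant h φ) := by
  funext a j
  simp only [plant, shift, add_sub_right_comm]

end Plant

section Norm

variable [Fintype G] [Fintype τ]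

lemma l2_nonneg (φ : JointState G τ) : 0 ≤ l2 φ := norm_nonneg _

lemma l2_zero : l2 (0 : JointState G τ) = 0 := norm_zero

lemma l2_sq (φ : JointState G τ) : l2 φ ^ 2 = ∑ a, ∑ j, ‖φ a j‖ ^ 2 := by
  rw [l2, EuclideanSpace.norm_sq_eq, Fintype.sum_prod_type]
  rfl

lemma l2_add_le (φ ψ : JointState G τ) : l2 (φ + ψ) ≤ l2 φ + l2 ψ := by
  have hadd : Function.uncurry (φ + ψ) = Function.uncurry φ + Function.uncurry ψ := rfl
  rw [l2, hadd, WithLp.toLp_add]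
  exact norm_add_le _ _

lemma l2_act [DecidableEq τ] {M : Matrix τ τ ℂ} (hM : M ∈ unitaryGroup τ ℂ)
    (φ : JointState G τ) : l2 (act M φ) = l2 φ := by
  refine (sq_eq_sq₀ (l2_nonneg _) (l2_nonneg _)).1 ?_
  simp only [l2_sq, act, sum_norm_sq_mulVec_of_mem_unitaryGroup hM]

lemma l2_act_sq_le {K : Matrix τ τ ℂ} (hK : ∀ w, ∑ j, ‖(K *ᵥ w) j‖ ^ 2 ≤ ∑ j, ‖w j‖ ^ 2)
    (φ : JointState G τ) : l2 (act K φ) ^ 2 ≤ l2 φ ^ 2 := by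
  rw [l2_sq, l2_sq]
  exact sum_le_sum fun a _ => hK (φ a)

lemma l2_shift [AddGroup G] (δ : τ → G) (φ : JointState G τ) : l2 (shift δ φ) = l2 φ := by
  refine (sq_eq_sq₀ (l2_nonneg _) (l2_nonneg _)).1 ?_
  rw [l2_sq, l2_sq, sum_comm, sum_comm (s := univ) (t := (univ : Finset τ))]
  exact sum_congr rfl fun j _ => Equiv.sum_comp (Equiv.subRight (δ j)) fun a => ‖φ a j‖ ^ 2

/-- The planted state sums `φ` over cosets, so what matters is how many nonzero entries a coset
has and how they are weighted against each other. -/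
lemma l2_plant_sq_le [AddCommGroup G] [AddGroup C] [Fintype C] (h : C →+ G) (φ : JointState G τ)
    {w : G → ℝ} {m : ℕ} (hw0 : ∀ a, 0 ≤ w a)
    (hcard : ∀ a j, #{c | φ (a + h c) j ≠ 0} ≤ m + 1)
    (hw : ∀ a c j, c ≠ 0 → φ a j ≠ 0 → φ (a + h c) j ≠ 0 → 1 ≤ w a * w (a + h c)) :
    l2 (plant h φ) ^ 2 ≤ ∑ a, (1 + m * w a) * ∑ j, ‖φ a j‖ ^ 2 := by
  have coset_le (a : G) (j : τ) : ‖∑ c, φ (a + h c) j‖ ^ 2 ≤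
      ∑ c, (1 + m * w (a + h c)) * ‖φ (a + h c) j‖ ^ 2 := by
    rw [← sum_filter_ne_zero]
    refine (norm_sum_sq_le (w := fun c => w (a + h c)) (hcard a j) (fun _ _ => hw0 _)
      fun c hc c' hc' hne => ?_).trans ?_
    · have hadd : a + h c + h (-c + c') = a + h c' := by
        rw [add_assoc, ← map_add, add_neg_cancel_left]
      have := hw (a + h c) (-c + c') j (by rwa [ne_eq, neg_add_eq_zero])
      rw [hadd] at this
      exact this (mem_filter.1 hc).2 (mem_filter.1 hc').2
    · refine sum_le_sum_of_subset_of_nonneg (filter_subset _ _) fun c _ _ => ?_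
      have := hw0 (a + h c)
      positivity
  have hC : (Fintype.card C : ℝ) ≠ 0 := Nat.cast_ne_zero.2 Fintype.card_ne_zero
  have norm_plant (a : G) (j : τ) : ‖plant h φ a j‖ ^ 2 =
      (Fintype.card C : ℝ)⁻¹ * ‖∑ c, φ (a + h c) j‖ ^ 2 := by
    rw [plant, norm_mul, norm_inv, Complex.norm_real, Real.norm_of_nonneg (Real.sqrt_nonneg _),
      mul_pow, inv_pow, Real.sq_sqrt (Nat.cast_nonneg _)]
  calc l2 (plant h φ) ^ 2
      = (Fintype.card C : ℝ)⁻¹ * ∑ a, ∑ j, ‖∑ c, φ (a + h c) j‖ ^ 2 := by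
        simp only [l2_sq, norm_plant, mul_sum]
    _ ≤ (Fintype.card C : ℝ)⁻¹ *
          ∑ a, ∑ j, ∑ c, (1 + m * w (a + h c)) * ‖φ (a + h c) j‖ ^ 2 := by
        gcongr with a _ j
        exact coset_le a j
    _ = (Fintype.card C : ℝ)⁻¹ *
          ∑ c, ∑ a, (1 + m * w (a + h c)) * ∑ j, ‖φ (a + h c) j‖ ^ 2 := by
        simp only [mul_sum (s := (univ : Finset τ))]
        simp only [sum_comm (s := (univ : Finset τ)) (t := (univ : Finset C))]
        rw [sum_comm]
    _ = (Fintype.card C : ℝ)⁻¹ * ∑ _c : C, ∑ a, (1 + m * w a) * ∑ j, ‖φ a j‖ ^ 2 := by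
        congr! 2 with c
        exact Equiv.sum_comp (Equiv.addRight (h c)) fun a => (1 + m * w a) * ∑ j, ‖φ a j‖ ^ 2
    _ = ∑ a, (1 + m * w a) * ∑ j, ‖φ a j‖ ^ 2 := by
        rw [sum_const, card_univ, nsmul_eq_mul, inv_mul_cancel_left₀ hC]

/-- The constants come from `‖φ + ψ‖ ^ 2 ≤ (1 + ε) * ‖φ‖ ^ 2 + (1 + ε⁻¹) * ‖ψ‖ ^ 2` with
`ε = 1 / 64`. -/
lemma l2_plant_act_sq_le [AddCommGroup G] [AddZeroClass C] [Fintype C] (h : C →+ G) (s : Set G)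
    {K : Matrix τ τ ℂ} (hK : ∀ w, ∑ j, ‖(K *ᵥ w) j‖ ^ 2 ≤ ∑ j, ‖w j‖ ^ 2)
    (φ : JointState G τ) :
    l2 (plant h (act K φ)) ^ 2 ≤ 65 / 64 * l2 (plant h (sᶜ.indicator (act K φ))) ^ 2 +
      65 * l2 (plant h (s.indicator φ)) ^ 2 := by
  have htriangle := l2_add_le (plant h (sᶜ.indicator (act K φ))) (plant h (s.indicator (act K φ)))
  rw [← plant_add, Set.indicator_compl_add_self] at htriangle
  have hsq := pow_le_pow_left₀ (l2_nonneg _) htriangle 2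
  have hcontract := l2_act_sq_le hK (plant h (s.indicator φ))
  rw [← plant_act, ← indicator_act] at hcontract
  linarith [sq_nonneg (l2 (plant h (sᶜ.indicator (act K φ))) -
    64 * l2 (plant h (s.indicator (act K φ))))]

end Norm

section Evolve

variable [Fintype G] [Fintype τ] [DecidableEq G] [DecidableEq τ]

lemma l2_evolve_sq [AddGroup G] {U : ℕ → Matrix τ τ ℂ} (hU : ∀ t, U t ∈ unitaryGroup τ ℂ)
    (δ : τ → G) (v : τ → ℂ) (t : ℕ) : l2 (evolve δ U v t) ^ 2 = ∑ j, ‖v j‖ ^ 2 := by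
  induction t with
  | zero =>
    rw [l2_sq, evolve, Fintype.sum_eq_single 0 fun a ha => by simp [ha], Pi.single_eq_same,
      sum_norm_sq_mulVec_of_mem_unitaryGroup (hU 0)]
  | succ t ih => rw [evolve, l2_act (hU _), l2_shift, ih]

/-- Matrices and queries act on the planted state isometrically, so planted amplitude on `s` can
only come from the crossings. -/
lemma l2_plant_indicator_evolve_le [AddCommGroup G] [AddZeroClass C] [Fintype C]
    {U : ℕ → Matrix τ τ ℂ} (hU : ∀ t, U t ∈ unitaryGroup τ ℂ) (δ : τ → G) (v : τ → ℂ)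
    (h : C →+ G) {s : Set G} (hs : 0 ∉ s) (T : ℕ) :
    l2 (plant h (s.indicator (evolve δ U v T))) ≤
      ∑ t ∈ range T, l2 (plant h (crossing s δ (evolve δ U v t))) := by
  induction T with
  | zero =>
    have hzero : s.indicator (evolve δ U v 0) = 0 := by
      funext a
      by_cases ha : a ∈ s
      · rw [Set.indicator_of_mem ha, evolve, Pi.single_eq_of_ne (ne_of_mem_of_not_mem ha hs)]
        rfl
      · rw [Set.indicator_of_notMem ha]
        rfl
    have hplant : plant h (0 : JointState G τ) = 0 := by
      funext a j
      simp [plant]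
    rw [hzero, hplant, l2_zero, range_zero, sum_empty]
  | succ T ih =>
    rw [evolve, indicator_act_shift, plant_add, plant_act, plant_act, plant_shift, sum_range_succ]
    refine (l2_add_le _ _).trans ?_
    rw [l2_act (hU _), l2_act (hU _), l2_shift]
    gcongr

end Evolve

end JointState

open JointState

section Frequencies

variable {ι R : Type*} [AddCommGroup R]

/-- The frequencies that are constant on `S` and vanish elsewhere; their annihilator consists of
the inputs whose sum over `S` is zero. -/
def constOn [DecidableEq ι] (S : Finset ι) : R →+ (ι → R) where
  toFun c i := if i ∈ S then c else 0
  map_zero' := by funext; simp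
  map_add' c c' := by funext i; by_cases hi : i ∈ S <;> simp [hi]

lemma constOn_apply [DecidableEq ι] (S : Finset ι) (c : R) (i : ι) :
    constOn S c i = if i ∈ S then c else 0 := rfl

variable [Fintype ι] [DecidableEq R]

/-- The support of a frequency: the positions it depends on. -/
def supp (a : ι → R) : Finset ι := {i | a i ≠ 0}

/-- The frequencies whose support contains `S`. -/
def covering (R : Type*) [AddCommGroup R] [DecidableEq R] (S : Finset ι) : Set (ι → R) :=
  {a | S ⊆ supp a}

lemma mem_supp {a : ι → R} {i : ι} : i ∈ supp a ↔ a i ≠ 0 := by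
  simp only [supp, mem_filter, mem_univ, true_and]

lemma mem_covering {S : Finset ι} {a : ι → R} : a ∈ covering R S ↔ ∀ i ∈ S, a i ≠ 0 :=
  forall₂_congr fun _ _ => mem_supp

variable {a b : ι → R} {i : ι} {S : Finset ι}

lemma card_supp_le_succ (hab : ∀ l ≠ i, a l = b l) : #(supp a) ≤ #(supp b) + 1 := by
  classical
  refine (card_le_card fun l hl => ?_).trans (card_insert_le i (supp b))
  obtain rfl | hli := eq_or_ne l i
  · exact mem_insert_self _ _
  · exact mem_insert_of_mem (mem_supp.2 (hab l hli ▸ mem_supp.1 hl))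

/-- A change in one coordinate alters whether `S` is covered only if that coordinate lies in `S`,
is zero before or after, and is the only obstruction. -/
lemma of_covering_change [DecidableEq ι] (hab : ∀ l ≠ i, a l = b l)
    (h : ¬(a ∈ covering R S ↔ b ∈ covering R S)) :
    i ∈ S ∧ S.erase i ⊆ supp b ∧ (a i = 0 ∨ b i = 0) := by
  simp only [mem_covering] at h
  refine ⟨?_, fun l hl => ?_, ?_⟩
  · by_contra hi
    exact h (forall₂_congr fun l hl => by rw [hab l (ne_of_mem_of_not_mem hl hi)])
  · obtain ⟨hli, hlS⟩ := mem_erase.1 hl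
    rw [mem_supp]
    intro hb
    exact h (iff_of_false (fun ha => ha l hlS (hab l hli ▸ hb)) fun hb' => hb' l hlS hb)
  · by_contra! hi
    refine h (forall₂_congr fun l _ => ?_)
    obtain rfl | hli := eq_or_ne l i
    · exact iff_of_true hi.1 hi.2
    · rw [hab l hli]

open Classical in
lemma card_covering_change_le (hab : ∀ l ≠ i, a l = b l) (k : ℕ) :
    #{S ∈ powersetCard k univ | ¬(a ∈ covering R S ↔ b ∈ covering R S)} ≤
      (#(supp b)).choose (k - 1) := by
  classical
  rw [← card_powersetCard]
  refine card_le_card_of_injOn (·.erase i) (fun S hS => ?_) ((erase_injOn' i).mono fun S hS => ?_)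
  all_goals
    obtain ⟨hcard, hS⟩ := mem_filter.1 hS
    obtain ⟨hiS, hsub, -⟩ := of_covering_change hab hS
  · rw [mem_coe, mem_powersetCard, card_erase_of_mem hiS, (mem_powersetCard.1 hcard).2]
    exact ⟨hsub, rfl⟩
  · exact hiS

end Frequencies

section Covering

variable {ι R τ : Type*} [Fintype ι] [AddCommGroup R] [DecidableEq R]
  {pos : τ → ι} {δ : τ → ι → R}

lemma evolve_eq_zero [Fintype τ] (hδ : ∀ j, ∀ l ≠ pos j, δ j l = 0) (U : ℕ → Matrix τ τ ℂ)
    (v : τ → ℂ) {t : ℕ} {a : ι → R} (ha : t < #(supp a)) : evolve δ U v t a = 0 := by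
  induction t generalizing a with
  | zero =>
    refine Pi.single_eq_of_ne ?_ _
    rintro rfl
    simp [supp] at ha
  | succ t ih =>
    have hshift : shift δ (evolve δ U v t) a = 0 := by
      funext j
      have hcard : #(supp a) ≤ #(supp (a - δ j)) + 1 :=
        card_supp_le_succ (i := pos j) fun l hl => by rw [Pi.sub_apply, hδ j l hl, sub_zero]
      exact congrFun (ih (by lia)) j
    rw [evolve, act, hshift, mulVec_zero]

variable [DecidableEq ι] [Fintype R] [Fintype τ]

/-- Within a coset of the constants on `S`, only two frequencies take part in a crossing: the
ones that vanish at the queried position before or after the query. -/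
lemma l2_plant_crossing_sq_le (hδ : ∀ j, ∀ l ≠ pos j, δ j l = 0) (S : Finset ι)
    (φ : JointState (ι → R) τ) :
    l2 (plant (constOn S) (crossing (covering R S) δ φ)) ^ 2 ≤
      2 * l2 (crossing (covering R S) δ φ) ^ 2 := by
  have hcard (a : ι → R) (j : τ) :
      #{c | crossing (covering R S) δ φ (a + constOn S c) j ≠ 0} ≤ 1 + 1 := by
    refine (card_le_card (t := {-a (pos j), δ j (pos j) - a (pos j)}) fun c hc => ?_).trans
      card_le_two
    have hchange : ¬(a + constOn S c ∈ covering R S ↔ a + constOn S c - δ j ∈ covering R S) := by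
      intro hiff
      rw [mem_filter, ← norm_ne_zero_iff, norm_crossing_apply, if_neg (not_not_intro hiff)] at hc
      exact hc.2 rfl
    obtain ⟨hpos, -, hzero⟩ := of_covering_change (i := pos j)
      (fun l hl => by rw [Pi.sub_apply _ (δ j), hδ j l hl, sub_zero]) hchange
    rw [Pi.sub_apply, Pi.add_apply, constOn_apply, if_pos hpos] at hzero
    rw [mem_insert, mem_singleton]
    refine hzero.imp (fun h => eq_neg_of_add_eq_zero_right h) fun h => ?_
    rw [eq_sub_iff_add_eq', sub_eq_zero.1 h]
  refine (l2_plant_sq_le (constOn S : R →+ (ι → R)) (crossing (covering R S) δ φ)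
    (w := fun _ => 1) (m := 1) (fun _ => zero_le_one) hcard
    fun _ _ _ _ _ _ => (one_mul _).ge).trans_eq ?_
  norm_num [l2_sq, mul_sum]

lemma sum_l2_crossing_sq_le (hδ : ∀ j, ∀ l ≠ pos j, δ j l = 0) {φ : JointState (ι → R) τ} {t : ℕ}
    (hφ : ∀ a, t < #(supp a) → φ a = 0) (k : ℕ) :
    ∑ S ∈ powersetCard k univ, l2 (crossing (covering R S) δ φ) ^ 2 ≤
      t.choose (k - 1) * l2 φ ^ 2 := by
  classical
  have entry_le (a : ι → R) (j : τ) :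
      ∑ S ∈ powersetCard k univ, ‖crossing (covering R S) δ φ a j‖ ^ 2 ≤
        t.choose (k - 1) * ‖shift δ φ a j‖ ^ 2 := by
    have hab : ∀ l ≠ pos j, a l = (a - δ j) l := fun l hl => by
      rw [Pi.sub_apply, hδ j l hl, sub_zero]
    simp only [norm_crossing_apply, ite_pow, zero_pow two_ne_zero]
    rw [← sum_filter, sum_const, nsmul_eq_mul]
    obtain ht | ht := le_or_gt #(supp (a - δ j)) t
    · have hcount := (card_covering_change_le hab k).trans (Nat.choose_le_choose (k - 1) ht)
      simp only [shift]
      gcongr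
    · simp [shift, hφ _ ht]
  calc ∑ S ∈ powersetCard k univ, l2 (crossing (covering R S) δ φ) ^ 2
      = ∑ a, ∑ j, ∑ S ∈ powersetCard k univ, ‖crossing (covering R S) δ φ a j‖ ^ 2 := by
        simp only [l2_sq]
        rw [sum_comm]
        exact sum_congr rfl fun a _ => sum_comm
    _ ≤ ∑ a, ∑ j, t.choose (k - 1) * ‖shift δ φ a j‖ ^ 2 :=
        sum_le_sum fun a _ => sum_le_sum fun j _ => entry_le a j
    _ = t.choose (k - 1) * l2 φ ^ 2 := by
        rw [← l2_shift δ φ, l2_sq]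
        simp only [mul_sum]

lemma l2_plant_covering_evolve_sq_le [DecidableEq τ] {U : ℕ → Matrix τ τ ℂ}
    (hU : ∀ t, U t ∈ unitaryGroup τ ℂ) (hδ : ∀ j, ∀ l ≠ pos j, δ j l = 0) (v : τ → ℂ)
    {S : Finset ι} (hS : S.Nonempty) (T : ℕ) :
    l2 (plant (constOn S) ((covering R S).indicator (evolve δ U v T))) ^ 2 ≤
      T * ∑ t ∈ range T, 2 * l2 (crossing (covering R S) δ (evolve δ U v t)) ^ 2 := by
  obtain ⟨i, hi⟩ := hS
  have hzero : (0 : ι → R) ∉ covering R S := fun h => mem_covering.1 h i hi rfl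
  calc _ ≤ (∑ t ∈ range T,
          l2 (plant (constOn S) (crossing (covering R S) δ (evolve δ U v t)))) ^ 2 := by
        gcongr
        · exact l2_nonneg _
        · exact l2_plant_indicator_evolve_le hU δ v _ hzero T
    _ ≤ T * ∑ t ∈ range T,
          l2 (plant (constOn S) (crossing (covering R S) δ (evolve δ U v t))) ^ 2 := by
        simpa only [card_range] using sq_sum_le_card_mul_sum_sq (s := range T)
    _ ≤ _ := by
        gcongr with t
        exact l2_plant_crossing_sq_le hδ S _

theorem sum_l2_plant_covering_evolve_sq_le [DecidableEq τ] {U : ℕ → Matrix τ τ ℂ}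
    (hU : ∀ t, U t ∈ unitaryGroup τ ℂ) (hδ : ∀ j, ∀ l ≠ pos j, δ j l = 0) (v : τ → ℂ) {k : ℕ}
    (hk : k ≠ 0) (T : ℕ) :
    ∑ S ∈ powersetCard k univ,
      l2 (plant (constOn S) ((covering R S).indicator (evolve δ U v T))) ^ 2 ≤
        2 * T ^ 2 * T.choose (k - 1) * ∑ j, ‖v j‖ ^ 2 := by
  calc _ ≤ ∑ S ∈ powersetCard k univ,
          (T : ℝ) * ∑ t ∈ range T, 2 * l2 (crossing (covering R S) δ (evolve δ U v t)) ^ 2 :=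
        sum_le_sum fun S hS => l2_plant_covering_evolve_sq_le hU hδ v
          (card_ne_zero.1 ((mem_powersetCard.1 hS).2 ▸ hk)) T
    _ = T * ∑ t ∈ range T, 2 * ∑ S ∈ powersetCard k univ,
          l2 (crossing (covering R S) δ (evolve δ U v t)) ^ 2 := by
        rw [← mul_sum, sum_comm]
        simp only [mul_sum]
    _ ≤ T * ∑ t ∈ range T, 2 * (T.choose (k - 1) * ∑ j, ‖v j‖ ^ 2) := by
        gcongr with t ht
        refine (sum_l2_crossing_sq_le hδ (fun a => evolve_eq_zero hδ U v) k).trans ?_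
        rw [l2_evolve_sq hU]
        gcongr
        exact (mem_range.1 ht).le
    _ = _ := by
        rw [sum_const, card_range, nsmul_eq_mul]
        ring

end Covering

section Noncovering

variable {ι R τ : Type*} [Fintype ι] [DecidableEq ι] [AddCommGroup R] [DecidableEq R]
  [Fintype R] [Fintype τ]

/-- Two distinct frequencies in a coset of the constants on `S` have supports that together
contain `S`, so weights growing with the covered part of `S` control the cross terms. -/
lemma l2_plant_noncovering_sq_le (S : Finset ι) {z : ℝ} (hz : 1 ≤ z)
    (φ : JointState (ι → R) τ) :
    l2 (plant (constOn S) ((covering R S)ᶜ.indicator φ)) ^ 2 ≤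
      ∑ a, (1 + #S * ((z ^ 2) ^ #(supp a ∩ S) / z ^ #S)) * ∑ j, ‖φ a j‖ ^ 2 := by
  have : 0 < z := by linarith
  have hcard (a : ι → R) (j : τ) :
      #{c | (covering R S)ᶜ.indicator φ (a + constOn S c) j ≠ 0} ≤ #S + 1 := by
    refine (card_le_card (t := S.image fun i => -a i) fun c hc => ?_).trans
      (card_image_le.trans (Nat.le_succ _))
    have hmem : a + constOn S c ∈ (covering R S)ᶜ := by
      by_contra hmem
      rw [mem_filter, Set.indicator_of_notMem hmem] at hc
      exact hc.2 rfl
    simp only [Set.mem_compl_iff, mem_covering, not_forall, not_not] at hmem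
    obtain ⟨i, hi, hzero⟩ := hmem
    rw [Pi.add_apply, constOn_apply, if_pos hi] at hzero
    exact mem_image.2 ⟨i, hi, (eq_neg_of_add_eq_zero_right hzero).symm⟩
  have weight_mul (a : ι → R) {c : R} (hc : c ≠ 0) : 1 ≤ (z ^ 2) ^ #(supp a ∩ S) / z ^ #S *
      ((z ^ 2) ^ #(supp (a + constOn S c) ∩ S) / z ^ #S) := by
    have hunion : S ⊆ supp a ∩ S ∪ supp (a + constOn S c) ∩ S := by
      intro i hi
      simp only [mem_union, mem_inter, hi, and_true, mem_supp, Pi.add_apply,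
        constOn_apply, if_true]
      by_contra! h
      exact hc (by simpa [h.1] using h.2)
    have hle := (card_le_card hunion).trans (card_union_le _ _)
    rw [div_mul_div_comm, one_le_div (by positivity), ← pow_mul, ← pow_mul,
      ← pow_add, ← pow_add]
    exact pow_le_pow_right₀ hz (by lia)
  refine (l2_plant_sq_le (constOn S : R →+ (ι → R)) ((covering R S)ᶜ.indicator φ)
    (w := fun a => (z ^ 2) ^ #(supp a ∩ S) / z ^ #S) (fun a => by positivity) hcard
    fun a _ _ hc _ _ => weight_mul a hc).trans ?_
  gcongr with a _ j
  by_cases ha : a ∈ covering R S <;> simp [ha]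

theorem sum_l2_plant_noncovering_sq_le {z : ℝ} (hz : 1 ≤ z) {T : ℕ}
    (hT : z ^ 2 * T ≤ Fintype.card ι) {φ : JointState (ι → R) τ}
    (hφ : ∀ a, T < #(supp a) → φ a = 0) (k : ℕ) :
    ∑ S ∈ powersetCard k univ, l2 (plant (constOn S) ((covering R S)ᶜ.indicator φ)) ^ 2 ≤
      (Fintype.card ι).choose k * (1 + k * (2 / z) ^ k) * l2 φ ^ 2 := by
  have : 0 < z := by linarith
  have weight_le (a : ι → R) : (∑ S ∈ powersetCard k univ,
      (1 + #S * ((z ^ 2) ^ #(supp a ∩ S) / z ^ #S))) * ∑ j, ‖φ a j‖ ^ 2 ≤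
        (Fintype.card ι).choose k * (1 + k * (2 / z) ^ k) * ∑ j, ‖φ a j‖ ^ 2 := by
    obtain ha | ha := le_or_gt #(supp a) T
    · have hmoment := sum_pow_card_inter_le (subset_univ (supp a)) k (one_le_pow₀ hz (n := 2))
        (le_trans (by gcongr) hT)
      gcongr
      calc _ = ∑ S ∈ powersetCard k univ, (1 + k / z ^ k * (z ^ 2) ^ #(supp a ∩ S)) := by
            refine sum_congr rfl fun S hS => ?_
            rw [(mem_powersetCard.1 hS).2]
            ring
        _ = (Fintype.card ι).choose k +
              k / z ^ k * ∑ S ∈ powersetCard k univ, (z ^ 2) ^ #(supp a ∩ S) := by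
            rw [sum_add_distrib, ← mul_sum, sum_const, card_powersetCard, card_univ,
              nsmul_eq_mul, mul_one]
        _ ≤ (Fintype.card ι).choose k +
              k / z ^ k * (2 ^ k * (Fintype.card ι).choose k) := by
            gcongr
            exact hmoment
        _ = _ := by
            rw [div_pow]
            ring
    · simp [hφ a ha]
  calc _ ≤ ∑ S ∈ powersetCard k univ,
        ∑ a, (1 + #S * ((z ^ 2) ^ #(supp a ∩ S) / z ^ #S)) * ∑ j, ‖φ a j‖ ^ 2 :=
        sum_le_sum fun S _ => l2_plant_noncovering_sq_le S hz φ
    _ ≤ ∑ a, (Fintype.card ι).choose k * (1 + k * (2 / z) ^ k) * ∑ j, ‖φ a j‖ ^ 2 := by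
        rw [sum_comm]
        simp only [← sum_mul]
        exact sum_le_sum fun a _ => weight_le a
    _ = _ := by rw [l2_sq, mul_sum]

theorem sum_l2_plant_act_evolve_sq_le [DecidableEq τ] {pos : τ → ι} {δ : τ → ι → R}
    (hδ : ∀ j, ∀ l ≠ pos j, δ j l = 0) {U : ℕ → Matrix τ τ ℂ}
    (hU : ∀ t, U t ∈ unitaryGroup τ ℂ) {K : Matrix τ τ ℂ}
    (hK : ∀ w, ∑ j, ‖(K *ᵥ w) j‖ ^ 2 ≤ ∑ j, ‖w j‖ ^ 2) (v : τ → ℂ) {k T : ℕ} (hk : k ≠ 0)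
    (hT : 1024 * T ≤ Fintype.card ι) :
    ∑ S ∈ powersetCard k univ, l2 (plant (constOn S) (act K (evolve δ U v T))) ^ 2 ≤
      (Fintype.card ι).choose k * l2 (act K (evolve δ U v T)) ^ 2 +
        ((Fintype.card ι).choose k / 12 + 130 * T ^ 2 * T.choose (k - 1)) * ∑ j, ‖v j‖ ^ 2 := by
  set ψ := evolve δ U v T with hψ
  have hact : l2 (act K ψ) ^ 2 ≤ ∑ j, ‖v j‖ ^ 2 :=
    (l2_act_sq_le hK ψ).trans_eq (l2_evolve_sq hU δ v T)
  have hweight : (k : ℝ) * (2 / 32) ^ k ≤ 1 / 16 := by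
    obtain ⟨m, rfl⟩ := Nat.exists_eq_succ_of_ne_zero hk
    have hm : ((m + 1 : ℕ) : ℝ) ≤ 16 ^ m := by exact_mod_cast Nat.lt_pow_self (by norm_num)
    calc ((m + 1 : ℕ) : ℝ) * (2 / 32) ^ (m + 1) ≤ 16 ^ m * (2 / 32) ^ (m + 1) := by gcongr
      _ = 1 / 16 := by
        rw [pow_succ, ← mul_assoc, ← mul_pow]
        norm_num
  have hnon := sum_l2_plant_noncovering_sq_le (z := 32) (by norm_num) (T := T)
    (φ := act K ψ) (by norm_num; exact_mod_cast hT)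
    (fun a ha => by rw [act, hψ, evolve_eq_zero hδ U v ha, mulVec_zero]) k
  have hcov := sum_l2_plant_covering_evolve_sq_le hU hδ v hk T
  calc _ ≤ 65 / 64 * ∑ S ∈ powersetCard k univ,
            l2 (plant (constOn S) ((covering R S)ᶜ.indicator (act K ψ))) ^ 2 +
          65 * ∑ S ∈ powersetCard k univ,
            l2 (plant (constOn S) ((covering R S).indicator ψ)) ^ 2 := by
        rw [mul_sum, mul_sum, ← sum_add_distrib]
        exact sum_le_sum fun S _ => l2_plant_act_sq_le (constOn S : R →+ (ι → R)) _ hK ψ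
    _ ≤ 65 / 64 * ((Fintype.card ι).choose k * (1 + 1 / 16) * l2 (act K ψ) ^ 2) +
          65 * (2 * T ^ 2 * T.choose (k - 1) * ∑ j, ‖v j‖ ^ 2) := by
        gcongr
        exact hnon.trans (by gcongr)
    _ ≤ _ := by
        have := mul_le_mul_of_nonneg_left hact ((Fintype.card ι).choose k).cast_nonneg (α := ℝ)
        have hv : 0 ≤ (Fintype.card ι).choose k * ∑ j, ‖v j‖ ^ 2 := by positivity
        linarith

end Noncovering

/-! ### Return from the Fourier basis to inputs -/

section Amplitudes

lemma constOn_dotProduct {ι R : Type*} [Fintype ι] [DecidableEq ι] [Ring R] (S : Finset ι)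
    (c : R) (x : ι → R) : constOn S c ⬝ᵥ x = c * ∑ i ∈ S, x i := by
  simp only [dotProduct, constOn_apply, ite_mul, zero_mul, sum_ite_mem, univ_inter, mul_sum]

variable {ι : Type*} {τ : Type} {q : ℕ} [Fintype ι] [NeZero q]

/-- The state of the algorithm's register when the input is `x`, up to the normalisation of the
Fourier transform. -/
noncomputable def amp [DecidableEq ι] (φ : JointState (ι → ZMod q) τ) (x : ι → ZMod q) : τ → ℂ :=
  fun j => ∑ a, ZMod.stdAddChar (a ⬝ᵥ x) * φ a j

/-- The oracle that multiplies basis state `j` by the character `δ j` of the input. -/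
noncomputable def phaseOracle [DecidableEq τ] (δ : τ → ι → ZMod q) (x : ι → ZMod q) :
    Matrix τ τ ℂ :=
  diagonal fun j => ZMod.stdAddChar (δ j ⬝ᵥ x)

lemma star_stdAddChar (b : ZMod q) : star (ZMod.stdAddChar b : ℂ) = ZMod.stdAddChar (-b) := by
  rw [AddChar.map_neg_eq_conj, RCLike.star_def]

lemma phaseOracle_mem_unitaryGroup [Fintype τ] [DecidableEq τ] (δ : τ → ι → ZMod q)
    (x : ι → ZMod q) : phaseOracle δ x ∈ unitaryGroup τ ℂ := by
  rw [mem_unitaryGroup_iff, star_eq_conjTranspose, phaseOracle, diagonal_conjTranspose,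
    diagonal_mul_diagonal, ← diagonal_one]
  congr! 2 with j
  rw [Pi.star_apply, star_stdAddChar, ← AddChar.map_add_eq_mul, add_neg_cancel,
    AddChar.map_zero_eq_one]

variable [DecidableEq ι]

lemma amp_act [Fintype τ] (M : Matrix τ τ ℂ) (φ : JointState (ι → ZMod q) τ)
    (x : ι → ZMod q) : amp (act M φ) x = M *ᵥ amp φ x := by
  funext j
  simp only [amp, act, mulVec, dotProduct, mul_sum]
  rw [sum_comm]
  exact sum_congr rfl fun _ _ => sum_congr rfl fun _ _ => mul_left_comm _ _ _

lemma sum_stdAddChar_mul_add (f : (ι → ZMod q) → ℂ) (d x : ι → ZMod q) :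
    ∑ a, ZMod.stdAddChar (a ⬝ᵥ x) * f (a + d) =
      ZMod.stdAddChar (-(d ⬝ᵥ x)) * ∑ a, ZMod.stdAddChar (a ⬝ᵥ x) * f a := by
  rw [← Equiv.sum_comp (Equiv.addRight d) fun a => ZMod.stdAddChar (a ⬝ᵥ x) * f a, mul_sum]
  refine sum_congr rfl fun a _ => ?_
  rw [Equiv.coe_addRight, ← mul_assoc, ← AddChar.map_add_eq_mul, add_dotProduct,
    add_comm (a ⬝ᵥ x), neg_add_cancel_left]

lemma amp_shift [Fintype τ] [DecidableEq τ] (δ : τ → ι → ZMod q)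
    (φ : JointState (ι → ZMod q) τ) (x : ι → ZMod q) :
    amp (shift δ φ) x = phaseOracle δ x *ᵥ amp φ x := by
  funext j
  simp only [amp, shift, phaseOracle, mulVec_diagonal, sub_eq_add_neg]
  rw [sum_stdAddChar_mul_add (φ · j), neg_dotProduct, neg_neg]

lemma amp_evolve [Fintype τ] [DecidableEq τ] (δ : τ → ι → ZMod q) (U : ℕ → Matrix τ τ ℂ)
    (v : τ → ℂ) (x : ι → ZMod q) (t : ℕ) :
    amp (evolve δ U v t) x = qProd U (phaseOracle δ x) t *ᵥ v := by
  induction t with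
  | zero =>
    funext j
    rw [amp, evolve, Fintype.sum_eq_single 0 fun a ha => by simp [ha]]
    simp [qProd]
  | succ t ih =>
    rw [evolve, amp_act, amp_shift, ih, qProd, mulVec_mulVec, mulVec_mulVec, Matrix.mul_assoc]

lemma sum_stdAddChar_dotProduct (e : ι → ZMod q) :
    ∑ x, (ZMod.stdAddChar (e ⬝ᵥ x) : ℂ) =
      if e = 0 then (Fintype.card (ι → ZMod q) : ℂ) else 0 := by
  split_ifs with he
  · simp [he]
  · obtain ⟨i, hi⟩ := Function.ne_iff.1 he
    refine (AddChar.sum_eq_zero_iff_ne_zero (ψ := ZMod.stdAddChar.compAddMonoidHom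
      (dotProductBilin (ZMod q) (ZMod q) e).toAddMonoidHom)).2 ?_
    refine AddChar.ne_zero_iff.2 ⟨Pi.single i 1, ?_⟩
    have happly : dotProductBilin (ZMod q) (ZMod q) e (Pi.single i 1) = e i :=
      dotProduct_single_one e i
    rw [AddChar.compAddMonoidHom_apply, LinearMap.toAddMonoidHom_coe, happly,
      ← AddChar.map_zero_eq_one (ZMod.stdAddChar (N := q))]
    exact ZMod.injective_stdAddChar.ne hi

lemma card_mul_l2_sq [Fintype τ] (φ : JointState (ι → ZMod q) τ) :
    Fintype.card (ι → ZMod q) * l2 φ ^ 2 = ∑ x, ∑ j, ‖amp φ x j‖ ^ 2 := by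
  let F : Matrix (ι → ZMod q) (ι → ZMod q) ℂ := of fun x a => ZMod.stdAddChar (a ⬝ᵥ x)
  have hF : Fᴴ * F = ((Fintype.card (ι → ZMod q) : ℝ) : ℂ) • 1 := by
    ext a b
    simp only [F, mul_apply, conjTranspose_apply, of_apply, star_stdAddChar,
      ← AddChar.map_add_eq_mul, ← neg_dotProduct, ← add_dotProduct, sum_stdAddChar_dotProduct,
      neg_add_eq_zero, Matrix.smul_apply, one_apply, smul_eq_mul, mul_ite, mul_one, mul_zero,
      Complex.ofReal_natCast]
  rw [l2_sq, sum_comm, sum_comm (s := univ) (t := (univ : Finset τ)), mul_sum]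
  exact sum_congr rfl fun j _ => (sum_norm_sq_mulVec hF fun a => φ a j).symm

lemma amp_plant_constOn (S : Finset ι) (φ : JointState (ι → ZMod q) τ) (x : ι → ZMod q) :
    amp (plant (constOn S) φ) x =
      if ∑ i ∈ S, x i = 0 then ((√q : ℝ) : ℂ) • amp φ x else 0 := by
  have hsum (j : τ) : amp (plant (constOn S) φ) x j = ((√q : ℝ) : ℂ)⁻¹ *
      ((∑ c : ZMod q, ZMod.stdAddChar (c * -∑ i ∈ S, x i)) * amp φ x j) := by
    simp only [amp, plant, mul_left_comm, ← mul_sum, ZMod.card]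
    congr 1
    simp only [mul_sum (s := (univ : Finset (ZMod q)))]
    rw [sum_comm, sum_mul]
    refine sum_congr rfl fun c _ => ?_
    rw [sum_stdAddChar_mul_add (φ · j), constOn_dotProduct, mul_neg]
  have hq : ((√q : ℝ) : ℂ) ≠ 0 := by
    rw [Complex.ofReal_ne_zero, Real.sqrt_ne_zero']
    exact_mod_cast Nat.pos_of_neZero q
  funext j
  rw [hsum, AddChar.sum_mulShift _ (ZMod.isPrimitive_stdAddChar q), ZMod.card]
  simp only [neg_eq_zero]
  split_ifs
  · rw [Pi.smul_apply, smul_eq_mul, ← mul_assoc]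
    congr 1
    rw [inv_mul_eq_iff_eq_mul₀ hq, ← Complex.ofReal_mul, Real.mul_self_sqrt q.cast_nonneg,
      Complex.ofReal_natCast]
  · simp

lemma card_mul_l2_plant_constOn_sq [Fintype τ] (S : Finset ι)
    (φ : JointState (ι → ZMod q) τ) :
    Fintype.card (ι → ZMod q) * l2 (plant (constOn S) φ) ^ 2 =
      q * ∑ x with ∑ i ∈ S, x i = 0, ∑ j, ‖amp φ x j‖ ^ 2 := by
  rw [card_mul_l2_sq, sum_filter, mul_sum]
  refine sum_congr rfl fun x _ => ?_
  rw [amp_plant_constOn]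
  split_ifs
  · simp only [Pi.smul_apply, norm_smul, Complex.norm_real, mul_pow, ← mul_sum,
      Real.norm_of_nonneg (Real.sqrt_nonneg _), Real.sq_sqrt (Nat.cast_nonneg q)]
  · simp

lemma card_sum_eq_zero {S : Finset ι} (hS : S.Nonempty) :
    q * #{x : ι → ZMod q | ∑ i ∈ S, x i = 0} = Fintype.card (ι → ZMod q) := by
  obtain ⟨i, hi⟩ := hS
  have hzero (c : ZMod q) : constOn S c = 0 ↔ c = 0 :=
    ⟨fun h => by simpa [constOn_apply, hi] using congrFun h i, fun h => by rw [h, map_zero]⟩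
  have hdouble : ∑ x : ι → ZMod q, ∑ c : ZMod q, (ZMod.stdAddChar (constOn S c ⬝ᵥ x) : ℂ) =
      (Fintype.card (ι → ZMod q) : ℂ) := by
    rw [sum_comm]
    simp only [sum_stdAddChar_dotProduct, hzero, sum_ite_eq', mem_univ, if_true]
  simp only [constOn_dotProduct, AddChar.sum_mulShift _ (ZMod.isPrimitive_stdAddChar q),
    ZMod.card, ← Nat.cast_sum, ← sum_filter, sum_const, smul_eq_mul] at hdouble
  rw [mul_comm]
  exact_mod_cast hdouble

theorem sum_planted_le [Fintype τ] [DecidableEq τ] {pos : τ → ι} {δ : τ → ι → ZMod q}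
    (hδ : ∀ j, ∀ l ≠ pos j, δ j l = 0) {U : ℕ → Matrix τ τ ℂ}
    (hU : ∀ t, U t ∈ unitaryGroup τ ℂ) {K : Matrix τ τ ℂ}
    (hK : ∀ w, ∑ j, ‖(K *ᵥ w) j‖ ^ 2 ≤ ∑ j, ‖w j‖ ^ 2) (v : τ → ℂ) {k T : ℕ} (hk : k ≠ 0)
    (hT : 1024 * T ≤ Fintype.card ι) {p : (ι → ZMod q) → ℝ}
    (hp : ∀ x, p x = ∑ j, ‖(K *ᵥ (qProd U (phaseOracle δ x) T *ᵥ v)) j‖ ^ 2) :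
    ∑ S ∈ powersetCard k univ, q * ∑ x with ∑ i ∈ S, x i = 0, p x ≤
      (Fintype.card ι).choose k * ∑ x, p x + Fintype.card (ι → ZMod q) *
        (((Fintype.card ι).choose k / 12 + 130 * T ^ 2 * T.choose (k - 1)) * ∑ j, ‖v j‖ ^ 2) := by
  have hamp (x : ι → ZMod q) : p x = ∑ j, ‖amp (act K (evolve δ U v T)) x j‖ ^ 2 := by
    rw [hp, amp_act, amp_evolve]
  simp only [hamp, ← card_mul_l2_plant_constOn_sq, ← card_mul_l2_sq]
  rw [← mul_sum, mul_left_comm, ← mul_add]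
  gcongr
  exact sum_l2_plant_act_evolve_sq_le hδ hU hK v hk hT

end Amplitudes

section Fourier

variable {ι : Type} {q : ℕ} [DecidableEq ι]

/-- The translation `|b⟩ ↦ |b + c⟩` of a single answer register. -/
def translation (c : Fin q) : Matrix (Fin q) (Fin q) ℂ :=
  of fun a b => if a = b + c then 1 else 0

lemma oracleMatrix_eq_kronecker (W : ℕ) (x : Input ι fun _ => q) :
    oracleMatrix W x =
      blockDiagonal' (fun i => translation (x i)) ⊗ₖ (1 : Matrix (Fin W) (Fin W) ℂ) := by
  ext ⟨⟨i, a⟩, w⟩ ⟨⟨i', a'⟩, w'⟩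
  rw [oracleMatrix, of_apply, kroneckerMap_apply, one_apply]
  obtain rfl | hi := eq_or_ne i i'
  · rw [blockDiagonal'_apply_eq, translation, of_apply]
    by_cases hw : w = w' <;> by_cases ha : a = a' + x i <;> simp [hw, ha]
  · rw [blockDiagonal'_apply_ne _ _ _ hi, zero_mul, if_neg fun h => hi (congrArg Sigma.fst h.2)]

variable [NeZero q]

/-- The discrete Fourier transform of a single answer register. -/
noncomputable def dft (q : ℕ) [NeZero q] : Matrix (Fin q) (Fin q) ℂ :=
  of fun a b => ((√q : ℝ) : ℂ)⁻¹ * ZMod.stdAddChar (ZMod.finEquiv q a * ZMod.finEquiv q b)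

/-- The Fourier transform of the answer register of a query algorithm. -/
noncomputable def fourier (ι : Type) [DecidableEq ι] (q : ℕ) [NeZero q] (W : ℕ) :
    Matrix (QIdx ι (fun _ => q) W) (QIdx ι (fun _ => q) W) ℂ :=
  blockDiagonal' (fun _ => dft q) ⊗ₖ (1 : Matrix (Fin W) (Fin W) ℂ)

/-- The frequency added by a query in basis state `j`: it sits at the queried position, and its
value is the content of the Fourier transformed answer register. -/
def queryFreq {W : ℕ} (j : QIdx ι (fun _ => q) W) : ι → ZMod q :=
  Pi.single j.1.1 (ZMod.finEquiv q j.1.2)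

/-- An input with symbols in `ZMod q`, as an input of a query algorithm. -/
def toInput (x : ι → ZMod q) : Input ι (fun _ => q) := fun i => (ZMod.finEquiv q).symm (x i)

lemma dft_mem_unitaryGroup : dft q ∈ unitaryGroup (Fin q) ℂ := by
  have hq : (q : ℂ) ≠ 0 := Nat.cast_ne_zero.2 (NeZero.ne q)
  have hsqrt : ((√q : ℝ) : ℂ)⁻¹ * ((√q : ℝ) : ℂ)⁻¹ = (q : ℂ)⁻¹ := by
    rw [← mul_inv, ← Complex.ofReal_mul, Real.mul_self_sqrt q.cast_nonneg, Complex.ofReal_natCast]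
  rw [mem_unitaryGroup_iff]
  ext a b
  have hentry (c : Fin q) : dft q a c * star (dft q) c b =
      (q : ℂ)⁻¹ *
        ZMod.stdAddChar (ZMod.finEquiv q c * (ZMod.finEquiv q a - ZMod.finEquiv q b)) := by
    rw [star_apply, dft, of_apply, of_apply, star_mul', star_stdAddChar, mul_mul_mul_comm,
      ← AddChar.map_add_eq_mul, RCLike.star_def, map_inv₀, Complex.conj_ofReal, hsqrt]
    congr 2
    ring
  have hsum (d : ZMod q) : ∑ c, (ZMod.stdAddChar (ZMod.finEquiv q c * d) : ℂ) =
      if d = 0 then (q : ℂ) else 0 := by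
    refine (Equiv.sum_comp (ZMod.finEquiv q).toEquiv fun c => ZMod.stdAddChar (c * d)).trans ?_
    rw [AddChar.sum_mulShift _ (ZMod.isPrimitive_stdAddChar q), ZMod.card, Nat.cast_ite,
      Nat.cast_zero]
  rw [mul_apply, sum_congr rfl fun c _ => hentry c, ← mul_sum, hsum, one_apply]
  simp only [sub_eq_zero, EmbeddingLike.apply_eq_iff_eq]
  split_ifs
  · exact inv_mul_cancel₀ hq
  · rw [mul_zero]

lemma dft_mul_translation (c : Fin q) :
    dft q * translation c =
      diagonal (fun a => ZMod.stdAddChar (ZMod.finEquiv q a * ZMod.finEquiv q c)) * dft q := by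
  ext a b
  have hadd : ZMod.finEquiv q (b + c) = ZMod.finEquiv q b + ZMod.finEquiv q c := map_add _ b c
  rw [diagonal_mul, mul_apply]
  simp only [translation, of_apply, mul_ite, mul_one, mul_zero, sum_ite_eq', mem_univ, if_true,
    dft, hadd, mul_add, AddChar.map_add_eq_mul]
  ring

variable [Fintype ι]

lemma phaseOracle_queryFreq_eq_kronecker (W : ℕ) (x : ι → ZMod q) :
    phaseOracle queryFreq x =
      blockDiagonal' (fun i => diagonal fun a => (ZMod.stdAddChar (ZMod.finEquiv q a * x i) : ℂ))
        ⊗ₖ (1 : Matrix (Fin W) (Fin W) ℂ) := by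
  simp only [phaseOracle, queryFreq, single_dotProduct, blockDiagonal'_diagonal, ← diagonal_one,
    diagonal_kronecker_diagonal, mul_one]

lemma fourier_mem_unitaryGroup (W : ℕ) :
    fourier ι q W ∈ unitaryGroup (QIdx ι (fun _ => q) W) ℂ := by
  refine kronecker_mem_unitary ?_ (one_mem _)
  rw [mem_unitaryGroup_iff, star_eq_conjTranspose, blockDiagonal'_conjTranspose,
    ← blockDiagonal'_mul, ← blockDiagonal'_one]
  congr! 2
  exact mem_unitaryGroup_iff.1 dft_mem_unitaryGroup

lemma fourier_mul_oracleMatrix (W : ℕ) (x : ι → ZMod q) :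
    fourier ι q W * oracleMatrix W (toInput x) = phaseOracle queryFreq x * fourier ι q W := by
  rw [oracleMatrix_eq_kronecker, phaseOracle_queryFreq_eq_kronecker, fourier, ← mul_kronecker_mul,
    ← mul_kronecker_mul, ← blockDiagonal'_mul, ← blockDiagonal'_mul]
  simp only [dft_mul_translation, toInput, RingEquiv.apply_symm_apply]

lemma oracleMatrix_mem_unitaryGroup (W : ℕ) (x : ι → ZMod q) :
    oracleMatrix W (toInput x) ∈ unitaryGroup (QIdx ι (fun _ => q) W) ℂ := by
  have hF := fourier_mem_unitaryGroup (ι := ι) (q := q) W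
  rw [← Matrix.one_mul (oracleMatrix W _), ← mem_unitaryGroup_iff'.1 hF, Matrix.mul_assoc,
    fourier_mul_oracleMatrix]
  exact mul_mem (Unitary.star_mem hF) (mul_mem (phaseOracle_mem_unitaryGroup _ _) hF)

end Fourier

section Algorithms

lemma mul_qProd {τ : Type} [Fintype τ] {F D O : Matrix τ τ ℂ} {U V : ℕ → Matrix τ τ ℂ}
    (hO : F * O = D * F) (hU : ∀ t, F * U t = V t * F) (t : ℕ) :
    F * qProd U O t = qProd V D t * F := by
  induction t with
  | zero => exact hU 0
  | succ t ih =>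
    calc F * (U (t + 1) * O * qProd U O t) = F * U (t + 1) * O * qProd U O t := by
          simp only [Matrix.mul_assoc]
      _ = V (t + 1) * (F * O) * qProd U O t := by rw [hU, Matrix.mul_assoc (V _)]
      _ = V (t + 1) * D * (F * qProd U O t) := by rw [hO]; simp only [Matrix.mul_assoc]
      _ = V (t + 1) * D * qProd V D t * F := by rw [ih, Matrix.mul_assoc _ _ F]

lemma qProd_mem_unitaryGroup {τ : Type} [Fintype τ] [DecidableEq τ] {U : ℕ → Matrix τ τ ℂ}
    {O : Matrix τ τ ℂ} (hU : ∀ t, U t ∈ unitaryGroup τ ℂ) (hO : O ∈ unitaryGroup τ ℂ) (t : ℕ) :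
    qProd U O t ∈ unitaryGroup τ ℂ := by
  induction t with
  | zero => exact hU 0
  | succ t ih => exact mul_mem (mul_mem (hU _) hO) ih

lemma outProb_eq_sum_norm_sq {ι : Type} {α : ι → ℕ} [Fintype ι] [DecidableEq ι] (A : QAlg ι α)
    (x : Input ι α) (b : Option Bool) :
    A.outProb x b =
      ∑ j, ‖(diagonal (fun j => if A.out j = b then (1 : ℂ) else 0) *ᵥ A.finalState x) j‖ ^ 2 := by
  refine sum_congr rfl fun j _ => ?_
  rw [mulVec_diagonal]
  split_ifs <;> simp

variable {ι : Type} {q : ℕ} [Fintype ι] [DecidableEq ι] [NeZero q] (A : QAlg ι fun _ => q)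

lemma finalState_toInput (x : ι → ZMod q) :
    A.finalState (toInput x) = star (fourier ι q A.W) *ᵥ
      (qProd (fun t => fourier ι q A.W * A.U t * star (fourier ι q A.W))
        (phaseOracle queryFreq x) A.T *ᵥ (fourier ι q A.W *ᵥ A.init)) := by
  have hF : star (fourier ι q A.W) * fourier ι q A.W = 1 :=
    mem_unitaryGroup_iff'.1 (fourier_mem_unitaryGroup A.W)
  have hconj (t : ℕ) : fourier ι q A.W * A.U t =
      fourier ι q A.W * A.U t * star (fourier ι q A.W) * fourier ι q A.W := by
    rw [Matrix.mul_assoc _ _ (fourier ι q A.W), hF, Matrix.mul_one]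
  rw [mulVec_mulVec A.init, ← mul_qProd (fourier_mul_oracleMatrix A.W x) hconj, mulVec_mulVec,
    ← Matrix.mul_assoc, hF, Matrix.one_mul, QAlg.finalState]

lemma outProb_true_add_outProb_false_le (x : ι → ZMod q) :
    A.outProb (toInput x) (some true) + A.outProb (toInput x) (some false) ≤ 1 := by
  have hnorm : ∑ j, ‖A.finalState (toInput x) j‖ ^ 2 = 1 := by
    rw [QAlg.finalState, sum_norm_sq_mulVec_of_mem_unitaryGroup
      (qProd_mem_unitaryGroup A.unitary (oracleMatrix_mem_unitaryGroup _ x) _), A.init_norm]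
  rw [QAlg.outProb, QAlg.outProb, ← sum_add_distrib, ← hnorm]
  gcongr with j
  rcases A.out j with _ | _ | _ <;> simp

theorem sum_planted_outProb_le {k : ℕ} (hk : k ≠ 0) (hT : 1024 * A.T ≤ Fintype.card ι)
    (b : Option Bool) :
    ∑ S ∈ powersetCard k univ,
        q * ∑ x : ι → ZMod q with ∑ i ∈ S, x i = 0, A.outProb (toInput x) b ≤
      (Fintype.card ι).choose k * ∑ x : ι → ZMod q, A.outProb (toInput x) b +
        Fintype.card (ι → ZMod q) *
          ((Fintype.card ι).choose k / 12 + 130 * A.T ^ 2 * A.T.choose (k - 1)) := by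
  have hF := fourier_mem_unitaryGroup (ι := ι) (q := q) A.W
  have hcontract (w : QIdx ι (fun _ => q) A.W → ℂ) :
      ∑ j, ‖((diagonal (fun j => if A.out j = b then (1 : ℂ) else 0) *
        star (fourier ι q A.W)) *ᵥ w) j‖ ^ 2 ≤ ∑ j, ‖w j‖ ^ 2 := by
    rw [← sum_norm_sq_mulVec_of_mem_unitaryGroup (Unitary.star_mem hF) w]
    gcongr with j
    rw [← mulVec_mulVec, mulVec_diagonal, norm_mul]
    split_ifs <;> simp
  refine (sum_planted_le (δ := queryFreq) (fun j l hl => Pi.single_eq_of_ne hl _)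
    (fun t => mul_mem (mul_mem hF (A.unitary t)) (Unitary.star_mem hF)) hcontract
    (fourier ι q A.W *ᵥ A.init) hk hT fun x => ?_).trans_eq ?_
  · rw [outProb_eq_sum_norm_sq, finalState_toInput, mulVec_mulVec _ _ (star _)]
  · rw [sum_norm_sq_mulVec_of_mem_unitaryGroup hF, A.init_norm, mul_one]

end Algorithms

/-! ### Zero-sum sets of random inputs -/

section Gap

variable {ι : Type} {q : ℕ} [Fintype ι] [DecidableEq ι] [NeZero q]

/-- The number of `k`-element sets of positions over which the symbols of `x` sum to `0`. -/
def zeroSums (k : ℕ) (x : ι → ZMod q) : ℕ :=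
  #{S ∈ powersetCard k (univ : Finset ι) | ∑ i ∈ S, x i = 0}

lemma sum_zeroSums_mul (k : ℕ) (p : (ι → ZMod q) → ℝ) :
    ∑ x, zeroSums k x * p x =
      ∑ S ∈ powersetCard k (univ : Finset ι), ∑ x with ∑ i ∈ S, x i = 0, p x := by
  simp only [sum_filter]
  rw [sum_comm]
  refine sum_congr rfl fun x _ => ?_
  rw [← sum_filter, sum_const, nsmul_eq_mul, zeroSums]

lemma mul_sum_zeroSums {k : ℕ} (hk : k ≠ 0) :
    q * ∑ x : ι → ZMod q, (zeroSums k x : ℝ) =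
      (Fintype.card ι).choose k * Fintype.card (ι → ZMod q) := by
  have hS (S) (hS : S ∈ powersetCard k (univ : Finset ι)) :
      (q : ℝ) * ∑ x : ι → ZMod q with ∑ i ∈ S, x i = 0, (1 : ℝ) = Fintype.card (ι → ZMod q) := by
    have hne : S.Nonempty := card_ne_zero.1 ((mem_powersetCard.1 hS).2 ▸ hk)
    rw [sum_const, nsmul_one]
    exact_mod_cast card_sum_eq_zero hne
  have hcount := sum_zeroSums_mul (ι := ι) (q := q) k fun _ => 1
  simp only [mul_one] at hcount
  rw [hcount, mul_sum, sum_congr rfl hS, sum_const, card_powersetCard, card_univ, nsmul_eq_mul]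

lemma planted_gap_le {k : ℕ} (hk : k ≠ 0) (hq : 2 * (Fintype.card ι).choose k ≤ q)
    {p : (ι → ZMod q) → ℝ} (hpos : ∀ x, zeroSums k x ≠ 0 → 2 / 3 ≤ p x)
    (hneg : ∀ x, zeroSums k x = 0 → p x ≤ 1 / 3) :
    (Fintype.card ι).choose k * ∑ x, p x +
        Fintype.card (ι → ZMod q) * ((Fintype.card ι).choose k / 6) ≤
      ∑ S ∈ powersetCard k (univ : Finset ι), q * ∑ x with ∑ i ∈ S, x i = 0, p x := by
  rw [← mul_sum, ← sum_zeroSums_mul]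
  have htotal := mul_sum_zeroSums (ι := ι) (q := q) hk
  have hqc : 2 * ((Fintype.card ι).choose k : ℝ) ≤ q := by exact_mod_cast hq
  set c : ℝ := ((Fintype.card ι).choose k : ℝ)
  set N : ℝ := (Fintype.card (ι → ZMod q) : ℝ)
  set Z : ℝ := ∑ x : ι → ZMod q, (zeroSums k x : ℝ)
  have hc : 0 ≤ c := Nat.cast_nonneg _
  have hpoint (x) : 2 / 3 * (q * zeroSums k x - c) + c / 3 * (1 - zeroSums k x) ≤
      q * (zeroSums k x * p x) - c * p x := by
    obtain hx | hx := eq_or_ne (zeroSums k x) 0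
    · rw [hx, Nat.cast_zero]
      linarith [mul_le_mul_of_nonneg_left (hneg x hx) hc]
    · have hZ : (1 : ℝ) ≤ zeroSums k x := by exact_mod_cast Nat.one_le_iff_ne_zero.2 hx
      have hexcess : 0 ≤ q * zeroSums k x - c := by nlinarith
      linarith [mul_le_mul_of_nonneg_left (hpos x hx) hexcess, mul_le_mul_of_nonneg_left hZ hc]
  have hsum : 2 / 3 * (q * Z - N * c) + c / 3 * (N - Z) ≤
      q * ∑ x, zeroSums k x * p x - c * ∑ x, p x := by
    simpa only [sum_add_distrib, sum_sub_distrib, ← mul_sum, sum_const, card_univ, nsmul_eq_mul,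
      mul_one] using sum_le_sum fun x (_ : x ∈ univ) => hpoint x
  have hhalf : 2 * c * Z ≤ c * N := htotal ▸ by gcongr
  linarith

end Gap

lemma kSUMfn_toInput {n q : ℕ} [NeZero q] (k : ℕ) (x : Fin n → ZMod q) :
    kSUMfn n q k (toInput x) = some (ofProp (zeroSums k x ≠ 0)) := by
  have hcast (i) : ((toInput x i : ℕ) : ZMod q) = x i := by
    obtain ⟨m, rfl⟩ := Nat.exists_eq_succ_of_ne_zero (NeZero.ne q)
    exact ZMod.natCast_zmod_val (x i)
  have hsum (S : Finset (Fin n)) : (∑ i ∈ S, (toInput x i : ℕ)) % q = 0 ↔ ∑ i ∈ S, x i = 0 := by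
    rw [← Nat.dvd_iff_mod_eq_zero, ← ZMod.natCast_eq_zero_iff, Nat.cast_sum]
    simp only [hcast]
  simp only [kSUMfn, hsum, zeroSums, ne_eq, Finset.card_eq_zero, filter_eq_empty_iff,
    mem_powersetCard_univ, not_forall, not_not, exists_prop]

lemma choose_le_of_computes_kSUM {n q k : ℕ} [NeZero q] (hk : k ≠ 0) (hq : 2 * n.choose k ≤ q)
    (A : QAlg (Fin n) fun _ => q)
    (hA : ∀ x b, kSUMfn n q k x = some b → (2 : ℝ) / 3 ≤ A.outProb x (some b))
    (hT : 1024 * A.T ≤ n) :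
    (n.choose k : ℝ) / 12 ≤ 130 * A.T ^ 2 * A.T.choose (k - 1) := by
  have hpos (x : Fin n → ZMod q) (hx : zeroSums k x ≠ 0) :
      2 / 3 ≤ A.outProb (toInput x) (some true) :=
    hA _ true (by simp [kSUMfn_toInput, ofProp, hx])
  have hneg (x : Fin n → ZMod q) (hx : zeroSums k x = 0) :
      A.outProb (toInput x) (some true) ≤ 1 / 3 := by
    have hfalse : 2 / 3 ≤ A.outProb (toInput x) (some false) :=
      hA _ false (by simp [kSUMfn_toInput, ofProp, hx])
    linarith [outProb_true_add_outProb_false_le A x]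
  have hcard : Fintype.card (Fin n) = n := Fintype.card_fin n
  have hgap := (planted_gap_le hk (by rwa [hcard]) hpos hneg).trans
    (sum_planted_outProb_le A hk (by rwa [hcard]) (some true))
  have hN : (0 : ℝ) < Fintype.card (Fin n → ZMod q) := Nat.cast_pos.2 Fintype.card_pos
  rw [add_le_add_iff_left, mul_le_mul_iff_right₀ hN, hcard] at hgap
  linarith

/-! ### Attaining the query complexity -/

section ReadAll

lemma permMatrix_mem_unitaryGroup {τ R : Type*} [Fintype τ] [DecidableEq τ] [CommRing R]
    [StarRing R] (σ : Equiv.Perm τ) : σ.permMatrix R ∈ unitaryGroup τ R := by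
  rw [mem_unitaryGroup_iff, star_eq_conjTranspose, conjTranspose_permMatrix, ← permMatrix_mul,
    inv_mul_cancel, permMatrix_one]

lemma permMatrix_inv_mulVec_single {τ R : Type*} [Fintype τ] [DecidableEq τ] [CommRing R]
    (σ : Equiv.Perm τ) (j : τ) : σ⁻¹.permMatrix R *ᵥ Pi.single j 1 = Pi.single (σ j) 1 := by
  rw [permMatrix_mulVec]
  ext l
  simp only [Function.comp_apply, Pi.single_apply, Equiv.Perm.inv_eq_iff_eq, eq_comm (a := l)]

lemma oracleMatrix_mulVec_single {ι : Type} {α : ι → ℕ} [Fintype ι] [DecidableEq ι] {W : ℕ}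
    (x : Input ι α) (j : QIdx ι α W) :
    oracleMatrix W x *ᵥ Pi.single j 1 = Pi.single (⟨j.1.1, j.1.2 + x j.1.1⟩, j.2) 1 := by
  ext l
  rw [mulVec_single_one, col_apply, oracleMatrix, of_apply, Pi.single_apply]
  exact if_congr (by rw [Prod.ext_iff, and_comm]) rfl rfl

lemma outProb_of_finalState_eq_single {ι : Type} {α : ι → ℕ} [Fintype ι] [DecidableEq ι]
    {A : QAlg ι α} {x : Input ι α} {j : QIdx ι α A.W} (h : A.finalState x = Pi.single j 1) :
    A.outProb x (A.out j) = 1 := by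
  rw [QAlg.outProb, h, Finset.sum_eq_single j (fun l _ hl => by simp [hl]) (by simp), if_pos rfl]
  simp

variable {n q : ℕ}

/-- The number of workspace states needed to store an input. -/
def memSize (n q : ℕ) : ℕ := Fintype.card (Fin n → Fin q)

/-- The input stored in a state of the workspace register. -/
noncomputable def memEquiv (n q : ℕ) : Fin (memSize n q) ≃ (Fin n → Fin q) :=
  (Fintype.equivFin (Fin n → Fin q)).symm

variable [NeZero n]

/-- Swap the answer register with the memory cell of the queried position, and move on to the
next position. -/
noncomputable def storeAndMove (n q : ℕ) [NeZero n] :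
    Equiv.Perm (QIdx (Fin n) (fun _ => q) (memSize n q)) where
  toFun j := (⟨j.1.1 + 1, memEquiv n q j.2 j.1.1⟩,
    (memEquiv n q).symm (Function.update (memEquiv n q j.2) j.1.1 j.1.2))
  invFun j := (⟨j.1.1 - 1, memEquiv n q j.2 (j.1.1 - 1)⟩,
    (memEquiv n q).symm (Function.update (memEquiv n q j.2) (j.1.1 - 1) j.1.2))
  left_inv := by
    rintro ⟨⟨i, a⟩, w⟩
    simp
  right_inv := by
    rintro ⟨⟨i, a⟩, w⟩
    simp

/-- The unitaries of the algorithm that reads the whole input, one position after another. -/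
noncomputable def readStep (n q : ℕ) [NeZero n] (t : ℕ) :
    Matrix (QIdx (Fin n) (fun _ => q) (memSize n q)) (QIdx (Fin n) (fun _ => q) (memSize n q)) ℂ :=
  if t = 0 then 1 else (storeAndMove n q)⁻¹.permMatrix ℂ

lemma readStep_mem_unitaryGroup (t : ℕ) :
    readStep n q t ∈ unitaryGroup (QIdx (Fin n) (fun _ => q) (memSize n q)) ℂ := by
  rw [readStep]
  split_ifs
  · exact one_mem _
  · exact permMatrix_mem_unitaryGroup _

variable [NeZero q]

/-- The basis state after the first `t` positions of `x` have been read: the next query goes to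
position `t`, and the cells of the unread positions contain `0`. -/
noncomputable def readState (x : Fin n → Fin q) (t : ℕ) :
    QIdx (Fin n) (fun _ => q) (memSize n q) :=
  (⟨Fin.ofNat n t, 0⟩, (memEquiv n q).symm fun i => if (i : ℕ) < t then x i else 0)

lemma readState_zero_eq (x y : Fin n → Fin q) : readState x 0 = readState y 0 := by
  simp [readState]

lemma storeAndMove_query_readState (x : Fin n → Fin q) {t : ℕ} (ht : t < n) :
    storeAndMove n q (⟨Fin.ofNat n t, 0 + x (Fin.ofNat n t)⟩, (readState x t).2) =
      readState x (t + 1) := by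
  have hval : (Fin.ofNat n t : ℕ) = t := Nat.mod_eq_of_lt ht
  have hnext : Fin.ofNat n (t + 1) = Fin.ofNat n t + 1 := by
    ext
    simp [Fin.val_add]
  simp only [storeAndMove, readState, Equiv.coe_fn_mk, Equiv.apply_symm_apply, hval, lt_irrefl,
    if_false, hnext, zero_add]
  congr 2
  ext1 i
  obtain rfl | hi := eq_or_ne i (Fin.ofNat n t)
  · rw [Function.update_self, if_pos (by omega)]
  · have hit : (i : ℕ) ≠ t := fun h => hi (Fin.ext (h.trans hval.symm))
    rw [Function.update_of_ne hi]
    exact if_congr (by omega) rfl rfl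

lemma qProd_readStep_mulVec_single (x : Input (Fin n) fun _ => q) {t : ℕ} (ht : t ≤ n) :
    qProd (readStep n q) (oracleMatrix (memSize n q) x) t *ᵥ Pi.single (readState x 0) 1 =
      Pi.single (readState x t) 1 := by
  induction t with
  | zero => rw [qProd, readStep, if_pos rfl, one_mulVec]
  | succ t ih =>
    rw [qProd, ← mulVec_mulVec, ← mulVec_mulVec, ih (by omega), oracleMatrix_mulVec_single,
      readStep, if_neg t.succ_ne_zero, permMatrix_inv_mulVec_single,
      ← storeAndMove_query_readState x ht, readState]

/-- The algorithm that reads the whole input and outputs the value of `f`. -/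
noncomputable def readAll (f : PartialFn (Fin n) fun _ => q) : QAlg (Fin n) fun _ => q where
  T := n
  W := memSize n q
  U := readStep n q
  unitary := readStep_mem_unitaryGroup
  init := Pi.single (readState 0 0) 1
  init_norm := by
    rw [Finset.sum_eq_single (readState 0 0) (fun j _ hj => by simp [hj]) (by simp)]
    simp
  out j := f (memEquiv n q j.2)

lemma finalState_readAll (f : PartialFn (Fin n) fun _ => q) (x : Input (Fin n) fun _ => q) :
    (readAll f).finalState x = Pi.single (readState x n) 1 := by
  rw [← qProd_readStep_mulVec_single x le_rfl, readState_zero_eq x 0]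
  rfl

lemma outProb_readAll (f : PartialFn (Fin n) fun _ => q) (x : Input (Fin n) fun _ => q) :
    (readAll f).outProb x (f x) = 1 := by
  have hout : (readAll f).out (readState x n) = f x := by simp [readAll, readState]
  exact hout ▸ outProb_of_finalState_eq_single (finalState_readAll f x)

lemma exists_qAlg_T_le_Qq (f : PartialFn (Fin n) fun _ => q) :
    ∃ A : QAlg (Fin n) fun _ => q, A.T ≤ Qq f ∧
      ∀ x b, f x = some b → (2 : ℝ) / 3 ≤ A.outProb x (some b) := by
  refine Nat.sInf_mem (s := {d | ∃ A : QAlg (Fin n) fun _ => q, A.T ≤ d ∧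
    ∀ x b, f x = some b → (2 : ℝ) / 3 ≤ A.outProb x (some b)}) ⟨n, readAll f, le_rfl, ?_⟩
  intro x b hb
  rw [← hb, outProb_readAll]
  norm_num

end ReadAll

/-! ### Numerical estimates -/

section Numerics

lemma rpow_div_sqrt_le {x : ℝ} {k : ℕ} (hx : 1 ≤ x) (hk : k ≠ 0) :
    x ^ ((k : ℝ) / (k + 1)) / √k ≤ x := by
  have hk1 : (1 : ℝ) ≤ k := Nat.one_le_cast.2 (Nat.one_le_iff_ne_zero.2 hk)
  have hexp : (k : ℝ) / (k + 1) ≤ 1 := (div_le_one (by positivity)).2 (by linarith)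
  exact (div_le_self (by positivity) (Real.one_le_sqrt.2 hk1)).trans
    (Real.rpow_le_self_of_one_le hx hexp)

lemma mul_rpow_div_sqrt_pow_le {x : ℝ} {k : ℕ} (hx : 0 ≤ x) (hk : k ≠ 0) :
    k * (x ^ ((k : ℝ) / (k + 1)) / √k) ^ (k + 1) ≤ x ^ k := by
  have hk1 : (1 : ℝ) ≤ k := Nat.one_le_cast.2 (Nat.one_le_iff_ne_zero.2 hk)
  have hpow : (x ^ ((k : ℝ) / (k + 1))) ^ (k + 1) = x ^ k := by
    rw [← Real.rpow_mul_natCast hx, Nat.cast_add_one, div_mul_cancel₀ _ (by positivity),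
      Real.rpow_natCast]
  have hsqrt : (k : ℝ) ≤ √k ^ (k + 1) :=
    calc (k : ℝ) = √k ^ 2 := (Real.sq_sqrt (by positivity)).symm
      _ ≤ √k ^ (k + 1) := pow_le_pow_right₀ (Real.one_le_sqrt.2 hk1) (by omega)
  rw [div_pow, hpow, mul_div_left_comm]
  exact mul_le_of_le_one_right (by positivity) ((div_le_one (by positivity)).2 hsqrt)

lemma sq_mul_choose_mul_pow_le {n T : ℕ} (hT : T < n) (m : ℕ) :
    (T : ℝ) ^ 2 * T.choose m * n ^ (m + 1) ≤
      2 ^ (m + 1) * n.choose (m + 1) * ((m + 1) * T ^ (m + 2)) := by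
  obtain rfl | hT0 := eq_or_ne T 0
  · simp
  have hT1 : (1 : ℝ) ≤ T := Nat.one_le_cast.2 (Nat.one_le_iff_ne_zero.2 hT0)
  have hTn : (T : ℝ) + 1 ≤ n := by exact_mod_cast hT
  have hsucc : ((T : ℝ) + 1) * T.choose m = (T + 1).choose (m + 1) * (m + 1) := by
    exact_mod_cast Nat.add_one_mul_choose_eq T m
  have hratio : ((T + 1).choose (m + 1) : ℝ) * n ^ (m + 1) ≤
      (T + 1) ^ (m + 1) * n.choose (m + 1) :=
    choose_mul_pow_le (by positivity) hTn (by rw [Nat.cast_add_one, mul_comm]) _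
  calc (T : ℝ) ^ 2 * T.choose m * n ^ (m + 1)
      ≤ T * (T + 1) * T.choose m * n ^ (m + 1) := by gcongr; nlinarith
    _ = T * (m + 1) * ((T + 1).choose (m + 1) * n ^ (m + 1)) := by
        rw [mul_assoc (T : ℝ), hsucc]
        ring
    _ ≤ T * (m + 1) * ((2 * T) ^ (m + 1) * n.choose (m + 1)) := by
        refine mul_le_mul_of_nonneg_left (hratio.trans ?_) (by positivity)
        gcongr
        linarith
    _ = _ := by ring

lemma sq_mul_choose_pred_le {n k T : ℕ} {c : ℝ} (hn : n ≠ 0) (hk : k ≠ 0) (hc0 : 0 ≤ c)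
    (hc : c ≤ 1 / 2) (hT : (T : ℝ) ≤ c * ((n : ℝ) ^ ((k : ℝ) / (k + 1)) / √k)) :
    (T : ℝ) ^ 2 * T.choose (k - 1) ≤ 2 * c ^ 2 * n.choose k := by
  have hn1 : (1 : ℝ) ≤ n := Nat.one_le_cast.2 (Nat.one_le_iff_ne_zero.2 hn)
  have hTn : T < n := by
    have hR := mul_le_mul_of_nonneg_left (rpow_div_sqrt_le hn1 hk) hc0
    have : (T : ℝ) < n := by nlinarith
    exact_mod_cast this
  have hpow : k * (T : ℝ) ^ (k + 1) ≤ c ^ (k + 1) * n ^ k :=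
    calc k * (T : ℝ) ^ (k + 1)
        ≤ k * (c * ((n : ℝ) ^ ((k : ℝ) / (k + 1)) / √k)) ^ (k + 1) := by gcongr
      _ = c ^ (k + 1) * (k * ((n : ℝ) ^ ((k : ℝ) / (k + 1)) / √k) ^ (k + 1)) := by
          rw [mul_pow, mul_left_comm]
      _ ≤ c ^ (k + 1) * n ^ k := by
          gcongr
          exact mul_rpow_div_sqrt_pow_le n.cast_nonneg hk
  obtain ⟨m, rfl⟩ := Nat.exists_eq_succ_of_ne_zero hk
  rw [Nat.succ_eq_add_one, Nat.cast_add_one] at hpow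
  refine le_of_mul_le_mul_right ?_ (by positivity : (0 : ℝ) < n ^ (m + 1))
  calc (T : ℝ) ^ 2 * T.choose m * n ^ (m + 1)
      ≤ 2 ^ (m + 1) * n.choose (m + 1) * ((m + 1) * T ^ (m + 2)) := sq_mul_choose_mul_pow_le hTn m
    _ ≤ 2 ^ (m + 1) * n.choose (m + 1) * (c ^ (m + 2) * n ^ (m + 1)) := by gcongr
    _ = (2 * c) ^ m * (2 * c ^ 2 * n.choose (m + 1) * n ^ (m + 1)) := by ring
    _ ≤ 2 * c ^ 2 * n.choose (m + 1) * n ^ (m + 1) :=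
        mul_le_of_le_one_left (by positivity) (pow_le_one₀ (by positivity) (by linarith))

end Numerics

end QC

/-- For `k`-SUM on `n` numbers from `[q]`, if `q ≥ 2·(n choose k)`
then `Q(k-SUM) = Ω(n^{k/(k+1)} / √k)` with an absolute constant. -/
theorem kSUM_quantum_lower_bound :
    ∃ C : ℝ, 0 < C ∧ ∀ n k q : ℕ, k ≤ n → 2 * n.choose k ≤ q →
      C * ((n : ℝ) ^ ((k : ℝ) / ((k : ℝ) + 1)) / Real.sqrt k) ≤
        (QC.Qq (QC.kSUMfn n q k) : ℝ) := by
  refine ⟨1 / 1024, by norm_num, fun n k q hkn hq => ?_⟩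
  obtain rfl | hk := eq_or_ne k 0
  · simp
  have hchoose : 0 < n.choose k := Nat.choose_pos hkn
  have : NeZero n := ⟨by omega⟩
  have : NeZero q := ⟨by omega⟩
  obtain ⟨A, hAT, hA⟩ := QC.exists_qAlg_T_le_Qq (QC.kSUMfn n q k)
  refine le_trans ?_ (Nat.cast_le.2 hAT)
  by_contra! hfew
  have hn1 : (1 : ℝ) ≤ n := Nat.one_le_cast.2 NeZero.one_le
  have hTn : 1024 * (A.T : ℝ) ≤ n := by linarith [QC.rpow_div_sqrt_le hn1 hk]
  have hmany := QC.choose_le_of_computes_kSUM hk hq A hA (by exact_mod_cast hTn)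
  have hsmall := QC.sq_mul_choose_pred_le (NeZero.ne n) hk (by norm_num) (by norm_num) hfew.le
  have hchoose' : (0 : ℝ) < n.choose k := Nat.cast_pos.2 hchoose
  linarith
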